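/- arXiv:2505.15937 — 8 statements merged into one kernel-verified Lean document; each statement's English description precedes it below -/
import Mathlib

section
/- Let (λ_n)_{n≥0} be a sequence of positive real numbers that is nondecreasing with λ_n → +∞. Then there exists a continuous function f : 𝕋 → ℂ such that Σ_{n∈ℤ} |f̂(n)|² λ_{|n|} = +∞. -/
open MeasureTheory Filter Topology

noncomputable section

theorem aux_coeffCLM (n : ℤ) : ∃ L : C(UnitAddCircle, ℂ) →L[ℂ] ℂ, ∀ f, L f = fourierCoeff f n := by
  refine ⟨(innerSL ℂ (fourierBasis (T := 1) n)).comp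
    (ContinuousMap.toLp (E := ℂ) 2 AddCircle.haarAddCircle ℂ), fun f => ?_⟩
  rw [← fourierCoeff_toLp, ← fourierBasis_repr, HilbertBasis.repr_apply_apply]
  rfl

/-- If `(λ_n)` is a nondecreasing sequence of positive reals tending to `+∞`,
then there exists a continuous function `f` on the circle `𝕋 = ℝ/ℤ` whose Fourier
coefficients satisfy `Σ_{n ∈ ℤ} |f̂(n)|² λ_{|n|} = +∞`. -/
theorem statement0 (lam : ℕ → ℝ) (hpos : ∀ n, 0 < lam n) (hmono : Monotone lam)
    (htop : Tendsto lam atTop atTop) :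
    ∃ f : UnitAddCircle → ℂ, Continuous f ∧
      ¬ Summable (fun n : ℤ => ‖fourierCoeff f n‖ ^ 2 * lam n.natAbs) := by
  obtain ⟨φ, hφ, hl⟩ := Filter.extraction_forall_of_eventually
    (P := fun k n => (4 : ℝ) ^ k ≤ lam n) (fun k => htop.eventually_ge_atTop _)
  have hs : Summable (fun k : ℕ => ((1 / 2 : ℂ) ^ k) •
      (fourier (T := 1) (φ k : ℤ) : C(UnitAddCircle, ℂ))) := by
    apply Summable.of_norm
    have : Summable (fun k : ℕ => (1 / 2 : ℝ) ^ k) := summable_geometric_two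
    refine this.congr fun k => ?_
    have h1 : ‖(fourier (T := 1) (φ k : ℤ) : C(UnitAddCircle, ℂ))‖ = 1 := fourier_norm _
    rw [norm_smul, h1]
    simp
  set f := ∑' k : ℕ, ((1 / 2 : ℂ) ^ k) •
      (fourier (T := 1) (φ k : ℤ) : C(UnitAddCircle, ℂ)) with hf
  have hc : ∀ j, fourierCoeff f (φ j : ℤ) = (1 / 2 : ℂ) ^ j := by
    intro j
    obtain ⟨L, hL⟩ := aux_coeffCLM (φ j : ℤ)
    rw [← hL, hf, L.map_tsum hs, tsum_eq_single j]
    · rw [map_smul, hL, fourierCoeff_fourier]; simp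
    · intro k hk
      have : (φ j : ℤ) ≠ φ k := by
        exact_mod_cast fun h => hk (hφ.injective h).symm
      rw [map_smul, hL, fourierCoeff_fourier]; simp [this]
  refine ⟨f, f.continuous, fun hsum => ?_⟩
  have hinj : Function.Injective (fun k : ℕ => (φ k : ℤ)) := fun a b h => hφ.injective (Int.ofNat.inj h)
  have h0 := (hsum.comp_injective hinj).tendsto_atTop_zero
  have h1 : (1 : ℝ) ≤ 0 := by
    refine ge_of_tendsto' h0 fun k => ?_
    simp only [Function.comp, hc, Int.natAbs_natCast, norm_pow]
    have h2 : (‖(1 / 2 : ℂ)‖ ^ k) ^ 2 = ((4 : ℝ) ^ k)⁻¹ := by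
      rw [← pow_mul, mul_comm, pow_mul, ← inv_pow]; norm_num
    rw [h2, inv_mul_eq_div, one_le_div (by positivity)]
    exact hl k
  linarith
end
end

section
/- Let (w_n)_{n≥0} be a sequence of positive real numbers that is nonincreasing with w_n → 0. Then there exists a sequence of positive real numbers (a_n)_{n∈ℤ} with Σ_{n∈ℤ} a_n² w_{|n|} < ∞ such that there is no finite complex Borel measure μ on 𝕋 with μ̂(n) = a_n for all n ∈ ℤ. -/
open MeasureTheory Filter Topology

noncomputable section

/-- The `n`-th Fourier coefficient `μ̂(n) = ∫_𝕋 ζ^{-n} dμ(ζ)` of a finite complex Borel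
measure `μ` on the circle, computed through the Jordan decompositions of its real and
imaginary parts. -/
def cmFourierCoeff (μ : ComplexMeasure UnitAddCircle) (n : ℤ) : ℂ :=
  (∫ x, fourier (-n) x ∂(ComplexMeasure.re μ).toJordanDecomposition.posPart) -
  (∫ x, fourier (-n) x ∂(ComplexMeasure.re μ).toJordanDecomposition.negPart) +
  Complex.I * ((∫ x, fourier (-n) x ∂(ComplexMeasure.im μ).toJordanDecomposition.posPart) -
    (∫ x, fourier (-n) x ∂(ComplexMeasure.im μ).toJordanDecomposition.negPart))

lemma aux_int (ν : Measure UnitAddCircle) [IsFiniteMeasure ν] (n : ℤ) :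
    ‖∫ x, fourier (-n) x ∂ν‖ ≤ ν.real Set.univ := by
  have h := norm_integral_le_of_norm_le_const (μ := ν) (f := fun x => fourier (-n) x) (C := 1)
    (Eventually.of_forall fun x => by rw [fourier_apply]; exact (Circle.norm_coe _).le)
  simpa using h

lemma aux_bdd (μ : ComplexMeasure UnitAddCircle) : ∃ C : ℝ, ∀ n, ‖cmFourierCoeff μ n‖ ≤ C := by
  refine ⟨((ComplexMeasure.re μ).toJordanDecomposition.posPart.real Set.univ +
    (ComplexMeasure.re μ).toJordanDecomposition.negPart.real Set.univ) +
    ((ComplexMeasure.im μ).toJordanDecomposition.posPart.real Set.univ +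
    (ComplexMeasure.im μ).toJordanDecomposition.negPart.real Set.univ), fun n => ?_⟩
  unfold cmFourierCoeff
  refine (norm_add_le _ _).trans (add_le_add ?_ ?_)
  · exact (norm_sub_le _ _).trans (add_le_add (aux_int _ n) (aux_int _ n))
  · rw [norm_mul, Complex.norm_I, one_mul]
    exact (norm_sub_le _ _).trans (add_le_add (aux_int _ n) (aux_int _ n))

/-- If `(w_n)` is a nonincreasing sequence of positive reals tending to `0`,
then there is a sequence of positive reals `(a_n)_{n ∈ ℤ}` with `Σ a_n² w_{|n|} < ∞` which is
not the sequence of Fourier coefficients of any finite complex Borel measure on `𝕋`. -/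
theorem statement1 (w : ℕ → ℝ) (hpos : ∀ n, 0 < w n) (hanti : Antitone w)
    (hzero : Tendsto w atTop (𝓝 0)) :
    ∃ a : ℤ → ℝ, (∀ n, 0 < a n) ∧ Summable (fun n : ℤ => (a n) ^ 2 * w n.natAbs) ∧
      ¬ ∃ μ : ComplexMeasure UnitAddCircle, ∀ n : ℤ, cmFourierCoeff μ n = (a n : ℂ) := by
  obtain ⟨φ, hφ, hw⟩ := extraction_forall_of_eventually
    (P := fun k m => w m < (1 / 8 : ℝ) ^ k)
    (fun k => (tendsto_order.1 hzero).2 _ (by positivity))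
  set g : ℕ → ℝ := Function.extend φ (fun k => (2 : ℝ) ^ k) (fun m => (1 / 2 : ℝ) ^ m) with hg
  have hgφ : ∀ k, g (φ k) = 2 ^ k := fun k => hφ.injective.extend_apply _ _ k
  have hgn : ∀ m, (¬ ∃ k, φ k = m) → g m = (1 / 2) ^ m := fun m hm =>
    Function.extend_apply' _ _ _ hm
  have hgpos : ∀ m, 0 < g m := by
    intro m
    by_cases h : ∃ k, φ k = m
    · obtain ⟨k, rfl⟩ := h
      rw [hgφ]; positivity
    · rw [hgn m h]; positivity
  have hs : Summable fun m => g m ^ 2 * w m := by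
    have h1 : Summable (Function.extend φ (fun k => (1 / 2 : ℝ) ^ k) 0) :=
      (summable_extend_zero hφ.injective).2 summable_geometric_two
    have h2 : Summable fun m : ℕ => (1 / 4 : ℝ) ^ m * w 0 :=
      (summable_geometric_of_lt_one (by norm_num) (by norm_num)).mul_right _
    refine Summable.of_nonneg_of_le (fun m => mul_nonneg (sq_nonneg _) (hpos m).le) ?_ (h1.add h2)
    intro m
    have hw0 := hpos 0
    by_cases h : ∃ k, φ k = m
    · obtain ⟨k, rfl⟩ := h
      rw [hgφ, hφ.injective.extend_apply]
      have e : ((2 : ℝ) ^ k) ^ 2 * (1 / 8) ^ k = (1 / 2) ^ k := by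
        rw [← pow_mul, mul_comm k 2, pow_mul, ← mul_pow]; norm_num
      have : ((2 : ℝ) ^ k) ^ 2 * w (φ k) ≤ ((2 : ℝ) ^ k) ^ 2 * (1 / 8) ^ k :=
        mul_le_mul_of_nonneg_left (hw k).le (by positivity)
      have : 0 ≤ (1 / 4 : ℝ) ^ φ k * w 0 := by positivity
      linarith
    · rw [hgn m h, Function.extend_apply' _ _ _ h]
      have e : ((1 / 2 : ℝ) ^ m) ^ 2 = (1 / 4) ^ m := by
        rw [← pow_mul, mul_comm m 2, pow_mul]; norm_num
      rw [e, Pi.zero_apply, zero_add]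
      exact mul_le_mul_of_nonneg_left (hanti (Nat.zero_le m)) (by positivity)
  refine ⟨fun n => g n.natAbs, fun n => hgpos _, ?_, ?_⟩
  · apply Summable.of_nat_of_neg
    · simpa using hs
    · simpa using hs
  · rintro ⟨μ, hμ⟩
    obtain ⟨C, hC⟩ := aux_bdd μ
    obtain ⟨k, hk⟩ := pow_unbounded_of_one_lt C (one_lt_two : (1 : ℝ) < 2)
    have h := hC (φ k : ℤ)
    rw [hμ] at h
    beta_reduce at h
    rw [Int.natAbs_natCast, hgφ, Complex.norm_real, Real.norm_of_nonneg (by positivity)] at h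
    linarith
end
end

section
/- Let (λ_n)_{n≥1} be positive real numbers satisfying (i) Σ_{n≥1} 1/λ_n = +∞ and (ii) the doubling condition: there exists C > 1 such that C⁻¹ λ_n ≤ λ_k ≤ C λ_n whenever n ≥ 1 and n ≤ k ≤ 2n. Then there exists f ∈ L^∞(𝕋, m) with f ≥ 0 m-a.e. and ∫_𝕋 f dm > 0, such that the support of the measure f·m has empty interior in 𝕋, and Σ_{n∈ℤ} |f̂(n)|² λ_{|n|} < ∞. -/
open MeasureTheory Filter Topology

noncomputable section

/-- Normalized Haar (arc-length) probability measure on the circle `𝕋 = ℝ/ℤ`. -/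
def hm : Measure UnitAddCircle := AddCircle.haarAddCircle

/-- The support of the measure `f·m`: the complement of the largest open set on which `f`
vanishes `m`-a.e. -/
def measSupport (f : UnitAddCircle → ℝ) : Set UnitAddCircle :=
  (⋃₀ {U : Set UnitAddCircle | IsOpen U ∧ ∀ᵐ x ∂hm, x ∈ U → f x = 0})ᶜ

open scoped ContDiff

def PP : ℕ → (ℝ → ℝ) → Prop
  | 0, ψ => ContDiff ℝ ∞ ψ ∧ ∀ x, 1 < |x| → ψ x = 0
  | A + 1, ψ => ∃ h, PP A h ∧ ψ = deriv h

lemma PP_zero_deriv {h : ℝ → ℝ} (hh : PP 0 h) : PP 0 (deriv h) := by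
  obtain ⟨h1, h2⟩ := hh
  refine ⟨(contDiff_infty_iff_deriv.1 h1).2, fun x hx => ?_⟩
  have : h =ᶠ[𝓝 x] fun _ => (0:ℝ) := by
    have : ∀ᶠ y in 𝓝 x, 1 < |y| := continuous_abs.continuousAt.eventually (lt_mem_nhds hx)
    filter_upwards [this] with y hy using h2 y hy
  rw [this.deriv_eq]; simp

lemma PP_zero {A : ℕ} : ∀ {h : ℝ → ℝ}, PP A h → PP 0 h := by
  induction A with
  | zero => exact fun h => h
  | succ A ih =>
    rintro _ ⟨h, hh, rfl⟩
    exact PP_zero_deriv (ih hh)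

lemma PP_smul {A : ℕ} (c : ℝ) : ∀ {h : ℝ → ℝ}, PP A h → PP A (fun x => c * h x) := by
  induction A with
  | zero =>
    rintro h ⟨h1, h2⟩
    exact ⟨contDiff_const.mul h1, fun x hx => by simp [h2 x hx]⟩
  | succ A ih =>
    rintro _ ⟨h, hh, rfl⟩
    refine ⟨_, ih hh, ?_⟩
    funext x
    rw [deriv_const_mul]
    exact (contDiff_infty_iff_deriv.1 (PP_zero hh).1).1 x

lemma PP_step {A : ℕ} (B : ℝ) (hB : 1 ≤ B) : ∀ {h : ℝ → ℝ}, PP A h →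
    PP (A + 1) (fun x => B ^ (A + 1) * h (B * x) - h x) := by
  induction A with
  | zero =>
    rintro h ⟨h1, h2⟩
    have hc := h1.continuous
    let H : ℝ → ℝ := fun x => ∫ t in (-1:ℝ)..x, h t
    have hH : ∀ x, HasDerivAt H (h x) x := fun x =>
      intervalIntegral.integral_hasDerivAt_right (hc.intervalIntegrable _ _)
        (hc.stronglyMeasurableAtFilter _ _) hc.continuousAt
    have hHd : deriv H = h := funext fun x => (hH x).deriv
    have hHs : ContDiff ℝ ∞ H := by
      rw [contDiff_infty_iff_deriv]
      exact ⟨fun x => (hH x).differentiableAt, by rwa [hHd]⟩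
    have hHn : ∀ x, x ≤ -1 → H x = 0 := by
      intro x hx
      show ∫ t in (-1:ℝ)..x, h t = 0
      rw [intervalIntegral.integral_symm, intervalIntegral.integral_of_le hx,
        integral_Ioc_eq_integral_Ioo]
      rw [setIntegral_congr_fun (g := fun _ => (0:ℝ)) measurableSet_Ioo]
      · simp
      · intro t ht
        exact h2 t (by rw [abs_of_neg (by linarith [ht.2])]; linarith [ht.2])
    have hHp : ∀ x, 1 ≤ x → H x = H 1 := by
      intro x hx
      show ∫ t in (-1:ℝ)..x, h t = ∫ t in (-1:ℝ)..1, h t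
      rw [← intervalIntegral.integral_add_adjacent_intervals (b := 1)
        (hc.intervalIntegrable _ _) (hc.intervalIntegrable _ _)]
      rw [add_eq_left, intervalIntegral.integral_of_le hx]
      rw [setIntegral_congr_fun (g := fun _ => (0:ℝ)) measurableSet_Ioc]
      · simp
      · intro t ht
        exact h2 t (by rw [abs_of_pos (by linarith [ht.1])]; linarith [ht.1])
    refine ⟨fun x => H (B * x) - H x, ⟨?_, ?_⟩, ?_⟩
    · exact (hHs.comp (contDiff_const.mul contDiff_id)).sub hHs
    · intro x hx
      rcases lt_abs.1 hx with h | h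
      · simp only
        rw [hHp x h.le, hHp (B * x) (by nlinarith), sub_self]
      · simp only
        rw [hHn x (by linarith), hHn (B * x) (by nlinarith), sub_self]
    · funext x
      have h3 : HasDerivAt (fun x => H (B * x)) (h (B * x) * (B * 1)) x :=
        (hH (B * x)).comp x ((hasDerivAt_id x).const_mul B)
      have := (h3.sub (hH x)).deriv
      erw [this]; ring
  | succ A ih =>
    rintro _ ⟨h, hh, rfl⟩
    refine ⟨_, ih hh, ?_⟩
    funext x
    have hd := (contDiff_infty_iff_deriv.1 (PP_zero hh).1).1
    have h3 : HasDerivAt (fun x => h (B * x)) (deriv h (B * x) * (B * 1)) x :=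
        (hd (B * x)).hasDerivAt.comp x ((hasDerivAt_id x).const_mul B)
    have := ((h3.const_mul (B ^ (A+1))).sub (hd x).hasDerivAt).deriv
    erw [this]; ring

lemma PP_bdd {h : ℝ → ℝ} (hh : PP 0 h) : ∃ M, 0 < M ∧ ∀ x, |h x| ≤ M := by
  obtain ⟨h1, h2⟩ := hh
  obtain ⟨M, hM⟩ := isCompact_Icc.exists_bound_of_continuousOn (s := Set.Icc (-1:ℝ) 1)
    h1.continuous.continuousOn
  refine ⟨max M 1, by positivity, fun x => ?_⟩
  by_cases hx : 1 < |x|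
  · rw [h2 x hx]; simp
  · exact (hM x (abs_le.1 (not_lt.1 hx))).trans (le_max_left _ _)

lemma exists_psi (A : ℕ) : ∃ ψ : ℝ → ℝ, PP A ψ ∧ (∀ x, ψ x ≤ 1) ∧
    ∃ r : ℝ, 0 < r ∧ r < 1 ∧ ∀ x, |x| ≤ r → ψ x = 1 := by
  induction A with
  | zero =>
    let b : ContDiffBump (0:ℝ) := ⟨1/2, 1, by norm_num, by norm_num⟩
    refine ⟨b, ⟨b.contDiff, fun x hx => ?_⟩, fun x => b.le_one, 1/2, by norm_num, by norm_num,
      fun x hx => ?_⟩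
    · apply b.zero_of_le_dist
      rw [Real.dist_0_eq_abs]; exact hx.le
    · apply b.one_of_mem_closedBall
      rw [mem_closedBall_zero_iff]; exact hx
  | succ A ih =>
    obtain ⟨ψ, hψ, hle, r, hr, hr1, hone⟩ := ih
    obtain ⟨M, hM, hb⟩ := PP_bdd (PP_zero hψ)
    set B : ℝ := 1 / r + M + 1 with hBdef
    have hr' : 0 < 1 / r := by positivity
    have hB : 1 ≤ B := by linarith
    have hBA : B ≤ B ^ (A + 1) := by
      calc B = B ^ 1 := (pow_one B).symm
        _ ≤ _ := pow_le_pow_right₀ hB (by omega)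
    have hD : 0 < B ^ (A+1) - 1 := by linarith
    have hBr : 1 < B * r := by
      have : 1 / r * r = 1 := by field_simp
      nlinarith
    refine ⟨_, PP_smul ((B ^ (A+1) - 1)⁻¹) (PP_step B hB hψ), fun x => ?_, r / B, by positivity,
      ?_, fun x hx => ?_⟩
    · rw [inv_mul_le_iff₀ hD]
      by_cases hx : |x| ≤ r
      · rw [hone x hx]
        nlinarith [hle (B * x)]
      · rw [(PP_zero hψ).2 (B * x) (by rw [abs_mul, abs_of_pos (by linarith)]; nlinarith)]
        linarith [(abs_le.1 (hb x)).1]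
    · rw [div_lt_one (by linarith)]; linarith
    · have hx' : |x| ≤ r := hx.trans (div_le_self hr.le hB)
      rw [hone x hx', hone (B * x)]
      · field_simp
      · rw [abs_mul, abs_of_pos (by linarith)]
        rw [le_div_iff₀ (by linarith)] at hx; linarith

def II (x0 N : ℝ) (n : ℤ) (g h : ℝ → ℝ) : ℂ :=
  ∫ x in (0:ℝ)..1, Complex.exp (-(2 * Real.pi * Complex.I * n * x)) *
    ((g x : ℂ) * (h (N * x - N * x0) : ℂ))

lemma II_aux (c : ℂ) (x0 N : ℝ) (E : ℝ → ℂ) (hE : ∀ x, HasDerivAt E (-c * E x) x)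
    (g g' h h' : ℝ → ℝ) (hg : ∀ x, HasDerivAt g (g' x) x) (hh : ∀ x, HasDerivAt h (h' x) x)
    (cE : Continuous E) (cg : Continuous g) (cg' : Continuous g') (ch : Continuous h)
    (ch' : Continuous h') (z1 : h (N * 1 - N * x0) = 0) (z0 : h (N * 0 - N * x0) = 0) :
    (N:ℂ) * (∫ x in (0:ℝ)..1, E x * ((g x : ℂ) * (h' (N * x - N * x0) : ℂ))) +
    (∫ x in (0:ℝ)..1, E x * ((g' x : ℂ) * (h (N * x - N * x0) : ℂ))) =
    c * (∫ x in (0:ℝ)..1, E x * ((g x : ℂ) * (h (N * x - N * x0) : ℂ))) := by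
  have hh' : ∀ x, HasDerivAt (fun x => h (N * x - N * x0)) (h' (N * x - N * x0) * (N * 1)) x :=
    fun x => (hh (N * x - N * x0)).comp x (((hasDerivAt_id x).const_mul N).sub_const _)
  have hd : ∀ x, HasDerivAt (fun x => E x * ((g x : ℂ) * (h (N * x - N * x0) : ℂ)))
      ((-c * E x) * ((g x : ℂ) * (h (N * x - N * x0) : ℂ)) + E x * (((g' x : ℝ) : ℂ) *
        (h (N * x - N * x0) : ℂ) + (g x : ℂ) * ((h' (N * x - N * x0) * (N * 1) : ℝ) : ℂ))) x :=
    fun x => (hE x).mul (((hg x).ofReal_comp).mul ((hh' x).ofReal_comp))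
  have hint := intervalIntegral.integral_eq_sub_of_hasDerivAt (a := 0) (b := 1)
    (fun x _ => hd x) (Continuous.intervalIntegrable (by fun_prop) _ _)
  rw [z1, z0] at hint
  simp only [Complex.ofReal_zero, mul_zero, sub_zero] at hint
  rw [← intervalIntegral.integral_const_mul, ← intervalIntegral.integral_const_mul,
    ← intervalIntegral.integral_add (Continuous.intervalIntegrable (by fun_prop) _ _)
      (Continuous.intervalIntegrable (by fun_prop) _ _), ← sub_eq_zero,
    ← intervalIntegral.integral_sub (Continuous.intervalIntegrable (by fun_prop) _ _)
      (Continuous.intervalIntegrable (by fun_prop) _ _), ← hint]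
  congr 1
  funext x
  push_cast
  ring

lemma E_deriv (c : ℂ) (x : ℝ) : HasDerivAt (fun x : ℝ => Complex.exp (-(c * x)))
    (-c * Complex.exp (-(c * x))) x := by
  have h1 : HasDerivAt (fun y : ℝ => -(c * (y:ℂ))) (-(c * 1)) x :=
    ((Complex.ofRealCLM.hasDerivAt (x := x)).const_mul c).neg
  have := h1.cexp
  convert this using 1
  ring

lemma II_ident (x0 N : ℝ) (n : ℤ) (h0 : 1 < N * x0) (h1 : 1 < N - N * x0) (g h : ℝ → ℝ)
    (hg : ContDiff ℝ ∞ g) (hh : PP 0 h) :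
    (N : ℂ) * II x0 N n g (deriv h) + II x0 N n (deriv g) h
      = 2 * Real.pi * Complex.I * n * II x0 N n g h := by
  obtain ⟨hg0, hg1⟩ := contDiff_infty_iff_deriv.1 hg
  have hhc := hh.1
  obtain ⟨hh0, hh1⟩ := contDiff_infty_iff_deriv.1 hhc
  unfold II
  exact II_aux (2 * Real.pi * Complex.I * n) x0 N _ (E_deriv _) g (deriv g) h (deriv h)
    (fun x => (hg0 x).hasDerivAt) (fun x => (hh0 x).hasDerivAt) (by fun_prop) hg.continuous
    hg1.continuous hhc.continuous hh1.continuous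
    (hh.2 (N * 1 - N * x0) (by rw [mul_one]; exact h1.trans_le (le_abs_self _)))
    (hh.2 (N * 0 - N * x0) (by
      rw [mul_zero, zero_sub, abs_neg]; exact h0.trans_le (le_abs_self _)))

lemma II_base (x0 : ℝ) (g h : ℝ → ℝ) (hg : ContDiff ℝ ∞ g) (hh : PP 0 h) :
    ∃ K : ℝ, 0 < K ∧ ∀ (N : ℝ) (n : ℤ), 1 ≤ N → ‖II x0 N n g h‖ ≤ K / N := by
  obtain ⟨G, hG⟩ := isCompact_Icc.exists_bound_of_continuousOn (s := Set.Icc (0:ℝ) 1)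
    hg.continuous.continuousOn
  have ch := hh.1.continuous
  have cg := hg.continuous
  have hint : Integrable (fun x => |h x|) := by
    apply Continuous.integrable_of_hasCompactSupport (by fun_prop)
    apply HasCompactSupport.intro (K := Set.Icc (-1:ℝ) 1) isCompact_Icc
    intro x hx
    rw [hh.2 x (by by_contra hc; exact hx (abs_le.1 (not_lt.1 hc))), abs_zero]
  refine ⟨(|G|+1) * ((∫ x, |h x|) + 1), ?_, fun N n hN => ?_⟩
  · have : 0 ≤ ∫ x, |h x| := integral_nonneg fun x => abs_nonneg _
    positivity
  have hN0 : 0 < N := by linarith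
  have h1 : ‖II x0 N n g h‖ ≤ ∫ x in (0:ℝ)..1, (|G|+1) * |h (N * x - N * x0)| := by
    unfold II
    apply intervalIntegral.norm_integral_le_of_norm_le zero_le_one
    · filter_upwards with x hx
      rw [norm_mul, norm_mul]
      have : ‖Complex.exp (-(2 * Real.pi * Complex.I * n * x))‖ = 1 := by
        rw [Complex.norm_exp]; simp
      rw [this, one_mul, Complex.norm_real, Complex.norm_real]
      apply mul_le_mul_of_nonneg_right _ (abs_nonneg _)
      have := hG x ⟨hx.1.le, hx.2⟩
      linarith [le_abs_self G]
    · exact Continuous.intervalIntegrable (by fun_prop) _ _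
  refine h1.trans ?_
  rw [intervalIntegral.integral_const_mul,
    intervalIntegral.integral_comp_mul_sub (fun x => |h x|) hN0.ne', mul_div_assoc]
  apply mul_le_mul_of_nonneg_left _ (by positivity)
  rw [smul_eq_mul, inv_mul_eq_div]
  apply div_le_div_of_nonneg_right _ hN0.le
  rw [intervalIntegral.integral_of_le (by nlinarith)]
  have := setIntegral_le_integral (s := Set.Ioc (N * 0 - N * x0) (N * 1 - N * x0)) hint
    (Eventually.of_forall fun x => abs_nonneg _)
  linarith

lemma II_low (x0 : ℝ) (A : ℕ) : ∀ (g h : ℝ → ℝ), ContDiff ℝ ∞ g → PP A h →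
    ∃ K : ℝ, 0 < K ∧ ∀ (N : ℝ) (n : ℤ), 1 ≤ N → 1 < N * x0 → 1 < N - N * x0 →
      ‖II x0 N n g h‖ ≤ K / N * (max |(n:ℝ)| 1 / N) ^ A := by
  induction A with
  | zero =>
    intro g h hg hh
    obtain ⟨K, hK, H⟩ := II_base x0 g h hg hh
    exact ⟨K, hK, fun N n hN _ _ => by simpa using H N n hN⟩
  | succ A ih =>
    rintro g _ hg ⟨h, hh, rfl⟩
    obtain ⟨K1, hK1, H1⟩ := ih g h hg hh
    obtain ⟨K2, hK2, H2⟩ := ih (deriv g) h (contDiff_infty_iff_deriv.1 hg).2 hh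
    refine ⟨2 * Real.pi * K1 + K2, by positivity, fun N n hN h0 h1 => ?_⟩
    have hN0 : 0 < N := by linarith
    have e := II_ident x0 N n h0 h1 g h hg (PP_zero hh)
    set m : ℝ := max |(n:ℝ)| 1
    have e2 : N * ‖II x0 N n g (deriv h)‖ =
        ‖2 * Real.pi * Complex.I * n * II x0 N n g h - II x0 N n (deriv g) h‖ := by
      rw [← e, add_sub_cancel_right, norm_mul, Complex.norm_real, Real.norm_of_nonneg hN0.le]
    have e3 : ‖2 * Real.pi * Complex.I * n * II x0 N n g h‖ ≤
        2 * Real.pi * m * (K1 / N * (m / N) ^ A) := by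
      rw [norm_mul]
      apply mul_le_mul _ (H1 N n hN h0 h1) (norm_nonneg _) (by positivity)
      simp only [norm_mul, Complex.norm_I, mul_one, Complex.norm_real, Complex.norm_ofNat,
        Complex.norm_intCast, Real.norm_of_nonneg Real.pi_pos.le]
      gcongr
      exact le_max_left _ _
    have e4 : ‖II x0 N n (deriv g) h‖ ≤ m * (K2 / N * (m / N) ^ A) := by
      refine (H2 N n hN h0 h1).trans ?_
      exact le_mul_of_one_le_left (by positivity) (le_max_right _ _)
    have e5 := norm_sub_le (2 * Real.pi * Complex.I * n * II x0 N n g h) (II x0 N n (deriv g) h)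
    have : N * ‖II x0 N n g (deriv h)‖ ≤
        N * ((2 * Real.pi * K1 + K2) / N * (m / N) ^ (A + 1)) := by
      rw [e2]
      refine (e5.trans (add_le_add e3 e4)).trans (le_of_eq ?_)
      rw [pow_succ]; field_simp
    exact le_of_mul_le_mul_left this hN0

lemma II_high (x0 : ℝ) (A : ℕ) : ∀ (g h : ℝ → ℝ), ContDiff ℝ ∞ g → PP 0 h →
    ∃ K : ℝ, 0 < K ∧ ∀ (N : ℝ) (n : ℤ), 1 ≤ N → 1 < N * x0 → 1 < N - N * x0 → n ≠ 0 →
      ‖II x0 N n g h‖ ≤ K / N * (N / |(n:ℝ)|) ^ A := by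
  induction A with
  | zero =>
    intro g h hg hh
    obtain ⟨K, hK, H⟩ := II_base x0 g h hg hh
    exact ⟨K, hK, fun N n hN _ _ _ => by simpa using H N n hN⟩
  | succ A ih =>
    intro g h hg hh
    obtain ⟨K1, hK1, H1⟩ := ih g (deriv h) hg (PP_zero_deriv hh)
    obtain ⟨K2, hK2, H2⟩ := ih (deriv g) h (contDiff_infty_iff_deriv.1 hg).2 hh
    refine ⟨K1 + K2, by positivity, fun N n hN h0 h1 hn => ?_⟩
    have hN0 : 0 < N := by linarith
    have e := II_ident x0 N n h0 h1 g h hg hh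
    have hn0 : 0 < |(n:ℝ)| := by positivity
    have e2 : |(n:ℝ)| * ‖II x0 N n g h‖ ≤ ‖2 * Real.pi * Complex.I * n * II x0 N n g h‖ := by
      simp only [norm_mul, Complex.norm_I, mul_one, Complex.norm_real, Complex.norm_ofNat,
        Complex.norm_intCast, Real.norm_of_nonneg Real.pi_pos.le]
      gcongr
      nlinarith [Real.pi_gt_three]
    have e3 := norm_add_le ((N : ℂ) * II x0 N n g (deriv h)) (II x0 N n (deriv g) h)
    rw [e, norm_mul (N:ℂ), Complex.norm_real, Real.norm_of_nonneg hN0.le] at e3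
    have e4 : ‖II x0 N n (deriv g) h‖ ≤ N * (K2 / N * (N / |(n:ℝ)|) ^ A) :=
      (H2 N n hN h0 h1 hn).trans (le_mul_of_one_le_left (by positivity) hN)
    have e5 := mul_le_mul_of_nonneg_left (H1 N n hN h0 h1 hn) hN0.le
    have : |(n:ℝ)| * ‖II x0 N n g h‖ ≤
        |(n:ℝ)| * ((K1 + K2) / N * (N / |(n:ℝ)|) ^ (A + 1)) := by
      refine ((e2.trans e3).trans (add_le_add e5 e4)).trans (le_of_eq ?_)
      rw [pow_succ]; field_simp
    exact le_of_mul_le_mul_left this hn0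

def rh (t : ℝ) (j : ℕ) : ℝ := min (2 ^ j * t) (2 ^ j * t)⁻¹

lemma rh_nonneg {t : ℝ} (ht : 0 ≤ t) (j : ℕ) : 0 ≤ rh t j := by unfold rh; positivity

lemma rh_le_one {t : ℝ} (ht : 0 < t) (j : ℕ) : rh t j ≤ 1 := by
  unfold rh
  rcases le_total (2 ^ j * t) 1 with h | h
  · exact (min_le_left _ _).trans h
  · exact (min_le_right _ _).trans (inv_le_one_of_one_le₀ h)

lemma rh_sum {t : ℝ} (ht : 0 < t) (J L : ℕ) (hJL : J ≤ L) : ∑ j ∈ Finset.Ico J L, rh t j ≤ 6 := by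
  have key : ∀ j, rh t j ≤ 6 * (1 / (1 + 2 ^ j * t) - 1 / (1 + 2 ^ (j + 1) * t)) := by
    intro j
    have e : (2:ℝ) ^ (j+1) * t = 2 * (2 ^ j * t) := by ring
    rw [e]
    unfold rh
    have ha : 0 < 2 ^ j * t := by positivity
    generalize 2 ^ j * t = a at ha
    have e2 : 6 * (1 / (1 + a) - 1 / (1 + 2 * a)) = 6 * a / ((1 + a) * (1 + 2 * a)) := by
      field_simp; ring
    rw [e2, le_div_iff₀ (by positivity)]
    rcases le_total a 1 with h | h
    · calc min a a⁻¹ * ((1 + a) * (1 + 2 * a)) ≤ a * ((1 + a) * (1 + 2 * a)) := by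
            gcongr; exact min_le_left _ _
        _ ≤ a * (2 * 3) := by gcongr <;> linarith
        _ = _ := by ring
    · calc min a a⁻¹ * ((1 + a) * (1 + 2 * a)) ≤ a⁻¹ * ((1 + a) * (1 + 2 * a)) := by
            gcongr; exact min_le_right _ _
        _ ≤ a⁻¹ * ((2 * a) * (3 * a)) := by gcongr <;> linarith
        _ = _ := by field_simp; ring
  calc _ ≤ ∑ j ∈ Finset.Ico J L, 6 * (1 / (1 + 2 ^ j * t) - 1 / (1 + 2 ^ (j + 1) * t)) :=
        Finset.sum_le_sum fun j _ => key j
    _ = 6 * (1 / (1 + 2 ^ J * t) - 1 / (1 + 2 ^ L * t)) := by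
        rw [← Finset.mul_sum]
        have := Finset.sum_Ico_sub (fun j => -(1 / (1 + (2:ℝ) ^ j * t))) hJL
        congr 1
        rw [neg_sub_neg] at this
        rw [← this]
        apply Finset.sum_congr rfl
        intros; ring
    _ ≤ 6 := by
        have h1 : 1 / (1 + 2 ^ J * t) ≤ 1 := by
          rw [div_le_one (by positivity)]; linarith [show 0 < 2 ^ J * t by positivity]
        have h2 : 0 < 1 / (1 + 2 ^ L * t) := by positivity
        linarith

lemma II_rh (x0 : ℝ) (A : ℕ) (g h : ℝ → ℝ) (hg : ContDiff ℝ ∞ g) (hh : PP A h) :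
    ∃ K : ℝ, 0 < K ∧ ∀ (j : ℕ) (n : ℤ), 1 < 2 ^ j * x0 → 1 < 2 ^ j - 2 ^ j * x0 →
      ‖II x0 (2 ^ j) n g h‖ ≤ K / 2 ^ j * rh (1 / max |(n:ℝ)| 1) j ^ A := by
  obtain ⟨K1, hK1, H1⟩ := II_low x0 A g h hg hh
  obtain ⟨K2, hK2, H2⟩ := II_high x0 A g h hg (PP_zero hh)
  refine ⟨K1 + K2, by positivity, fun j n h0 h1 => ?_⟩
  have hN : (1:ℝ) ≤ 2 ^ j := one_le_pow₀ (by norm_num)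
  have hN0 : (0:ℝ) < 2 ^ j := by positivity
  unfold rh
  have hm : 1 ≤ max |(n:ℝ)| 1 := le_max_right _ _
  by_cases hc : max |(n:ℝ)| 1 ≤ 2 ^ j
  · rw [min_eq_right, mul_one_div, inv_div]
    · refine (H1 _ n hN h0 h1).trans ?_
      gcongr; linarith
    · rw [mul_one_div, inv_div, div_le_div_iff₀ (by positivity) (by positivity)]
      gcongr
  · push Not at hc
    have hn : 1 < |(n:ℝ)| := by
      rcases lt_max_iff.1 hc with h | h <;> linarith
    rw [max_eq_left hn.le] at hc ⊢
    rw [min_eq_left, mul_one_div]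
    · refine (H2 _ n hN h0 h1 ?_).trans ?_
      · rintro rfl; simp at hn; linarith
      · gcongr; linarith
    · rw [mul_one_div, inv_div, div_le_div_iff₀ (by positivity) (by positivity)]
      gcongr

lemma rh_sq_sum (j : ℕ) (S : Finset ℤ) :
    ∑ n ∈ S, rh (1 / max |(n:ℝ)| 1) j ^ 2 ≤ 16 * 2 ^ j := by
  have hN : (1:ℝ) ≤ 2 ^ j := one_le_pow₀ (by norm_num)
  set N : ℝ := 2 ^ j with hNd
  let G : ℕ → ℝ := fun k => 8 * N ^ 2 * (1 / (N + k) - 1 / (N + (k + 1 : ℕ)))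
  have hGe : ∀ k, G k = 8 * N ^ 2 / ((N + k) * (N + k + 1)) := by
    intro k
    simp only [G]; push_cast
    field_simp; ring
  have hG0 : ∀ k, 0 ≤ G k := fun k => by rw [hGe]; positivity
  have hF : ∀ n : ℤ, rh (1 / max |(n:ℝ)| 1) j ^ 2 ≤ G n.natAbs := by
    intro n
    have hm : 1 ≤ max |(n:ℝ)| 1 := le_max_right _ _
    have r0 := rh_nonneg (t := 1 / max |(n:ℝ)| 1) (by positivity) j
    have r1 := rh_le_one (t := 1 / max |(n:ℝ)| 1) (by positivity) j
    have r2 : rh (1 / max |(n:ℝ)| 1) j ≤ N / max |(n:ℝ)| 1 := by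
      unfold rh; exact (min_le_left _ _).trans (by rw [mul_one_div])
    rw [hGe, Nat.cast_natAbs, Int.cast_abs]
    have hk : 0 ≤ |(n:ℝ)| := abs_nonneg _
    have hk1 : n = 0 ∨ 1 ≤ |(n:ℝ)| := by
      by_cases h : n = 0
      · exact Or.inl h
      · right; exact_mod_cast Int.one_le_abs h
    by_cases hc : |(n:ℝ)| ≤ N
    · calc _ ≤ (1:ℝ) := pow_le_one₀ r0 r1
        _ ≤ _ := by
          rw [le_div_iff₀ (by positivity)]
          nlinarith
    · push Not at hc
      rw [max_eq_left (by linarith)] at *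
      calc _ ≤ (N / |(n:ℝ)|) ^ 2 := by gcongr
        _ ≤ _ := by
          have : 0 < |(n:ℝ)| := by linarith
          rw [div_pow, div_le_div_iff₀ (by positivity) (by positivity)]
          have : (N + |(n:ℝ)|) * (N + |(n:ℝ)| + 1) ≤ 8 * |(n:ℝ)| ^ 2 := by nlinarith
          nlinarith [sq_nonneg N]
  have hrange : ∀ M : ℕ, ∑ k ∈ Finset.range M, G k ≤ 8 * N := by
    intro M
    have := Finset.sum_range_sub' (fun k : ℕ => 1 / (N + (k:ℝ))) M
    simp only [G]
    rw [← Finset.mul_sum, this]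
    have h2 : 0 < 1 / (N + (M:ℝ)) := by positivity
    calc _ ≤ 8 * N ^ 2 * (1 / (N + (0:ℕ))) := by gcongr; linarith
      _ = _ := by simp; field_simp
  have half : ∀ T : Finset ℤ, Set.InjOn Int.natAbs (T : Set ℤ) →
      ∑ n ∈ T, rh (1 / max |(n:ℝ)| 1) j ^ 2 ≤ 8 * N := by
    intro T hT
    refine (Finset.sum_le_sum fun n _ => hF n).trans ?_
    rw [← Finset.sum_image (f := G) hT]
    obtain ⟨M, hM⟩ := (T.image Int.natAbs).exists_nat_subset_range
    exact (Finset.sum_le_sum_of_subset_of_nonneg hM fun i _ _ => hG0 i).trans (hrange M)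
  rw [← Finset.sum_filter_add_sum_filter_not S (fun n => 0 ≤ n)]
  have a1 := half (S.filter (fun n => 0 ≤ n)) (by
    intro a ha b hb hab
    simp at ha hb; omega)
  have a2 := half (S.filter (fun n => ¬ 0 ≤ n)) (by
    intro a ha b hb hab
    simp at ha hb; omega)
  linarith

lemma growth_aux (lam : ℕ → ℝ) (hpos : ∀ n, 0 < lam n) (C : ℝ) (p : ℕ) (hC : 1 < C)
    (hp : C ≤ 2 ^ p) (hdbl : ∀ n k : ℕ, 1 ≤ n → n ≤ k → k ≤ 2 * n →
      C⁻¹ * lam n ≤ lam k ∧ lam k ≤ C * lam n) :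
    ∀ d n N : ℕ, 1 ≤ N → N ≤ n → n - N ≤ d →
      lam n * N ^ p ≤ 2 ^ p * n ^ p * lam N ∧ lam N * N ^ p ≤ 2 ^ p * n ^ p * lam n := by
  have base : ∀ n N : ℕ, 1 ≤ N → N ≤ n → n ≤ 2 * N →
      lam n ≤ 2 ^ p * lam N ∧ lam N ≤ 2 ^ p * lam n := by
    intro n N h1 h2 h3
    obtain ⟨a, b⟩ := hdbl N n h1 h2 h3
    rw [inv_mul_le_iff₀ (by linarith)] at a
    exact ⟨b.trans (mul_le_mul_of_nonneg_right hp (hpos _).le),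
      a.trans (mul_le_mul_of_nonneg_right hp (hpos _).le)⟩
  intro d
  induction d with
  | zero =>
    intro n N h1 h2 h3
    obtain rfl : n = N := by omega
    have : (1:ℝ) ≤ 2 ^ p := one_le_pow₀ (by norm_num)
    have h4 : 0 ≤ lam n * (n:ℝ) ^ p := by have := hpos n; positivity
    constructor <;> nlinarith
  | succ d ih =>
    intro n N h1 h2 h3
    by_cases h : n ≤ 2 * N
    · obtain ⟨a, b⟩ := base n N h1 h2 h
      have hn : (N:ℝ) ^ p ≤ (n:ℝ) ^ p := by gcongr
      have := hpos n
      have := hpos N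
      constructor
      · calc _ ≤ 2 ^ p * lam N * (n:ℝ) ^ p := by gcongr
          _ = _ := by ring
      · calc _ ≤ 2 ^ p * lam n * (n:ℝ) ^ p := by gcongr
          _ = _ := by ring
    · obtain ⟨a, b⟩ := base (2 * N) N h1 (by omega) le_rfl
      obtain ⟨a', b'⟩ := ih n (2 * N) (by omega) (by omega) (by omega)
      push_cast at a' b'
      rw [mul_pow] at a' b'
      have hp0 : (0:ℝ) < 2 ^ p := by positivity
      have hN0 : (0:ℝ) ≤ (N:ℝ) ^ p := by positivity
      have hn0 : (0:ℝ) ≤ (n:ℝ) ^ p := by positivity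
      constructor
      · have : 2 ^ p * (lam n * (N:ℝ) ^ p) ≤ 2 ^ p * (2 ^ p * n ^ p * lam N) := by
          calc _ = lam n * (2 ^ p * (N:ℝ) ^ p) := by ring
            _ ≤ _ := a'
            _ ≤ 2 ^ p * n ^ p * (2 ^ p * lam N) := by gcongr
            _ = _ := by ring
        exact le_of_mul_le_mul_left this hp0
      · calc lam N * (N:ℝ) ^ p ≤ 2 ^ p * lam (2 * N) * N ^ p := by gcongr
          _ = lam (2 * N) * (2 ^ p * N ^ p) := by ring
          _ ≤ _ := b'

lemma growth (lam : ℕ → ℝ) (hpos : ∀ n, 0 < lam n) (C : ℝ) (p : ℕ) (hC : 1 < C)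
    (hp : C ≤ 2 ^ p) (hdbl : ∀ n k : ℕ, 1 ≤ n → n ≤ k → k ≤ 2 * n →
      C⁻¹ * lam n ≤ lam k ∧ lam k ≤ C * lam n) :
    ∃ D : ℝ, 0 < D ∧ ∀ (n : ℤ) (j : ℕ),
      lam n.natAbs * rh (1 / max |(n:ℝ)| 1) j ^ p ≤ D * lam (2 ^ j) := by
  have H := growth_aux lam hpos C p hC hp hdbl
  have main : ∀ (m j : ℕ), 1 ≤ m → lam m * rh (1 / (m:ℝ)) j ^ p ≤ 2 ^ p * lam (2 ^ j) := by
    intro m j hm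
    have hm0 : (0:ℝ) < m := by exact_mod_cast hm
    have r0 := rh_nonneg (t := 1 / (m:ℝ)) (by positivity) j
    have hl := hpos m
    rcases le_total (2 ^ j) m with h | h
    · have h1 := (H (m - 2 ^ j) m (2 ^ j) Nat.one_le_two_pow h le_rfl).1
      push_cast at h1
      calc _ ≤ lam m * (2 ^ j * (1 / (m:ℝ))) ^ p := by
            gcongr; exact min_le_left _ _
        _ = (lam m * (2 ^ j) ^ p) / (m:ℝ) ^ p := by rw [mul_one_div, div_pow]; ring
        _ ≤ _ := by
          rw [div_le_iff₀ (by positivity)]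
          linarith
    · have h1 := (H (2 ^ j - m) (2 ^ j) m hm h le_rfl).2
      push_cast at h1
      calc _ ≤ lam m * (2 ^ j * (1 / (m:ℝ)))⁻¹ ^ p := by
            gcongr; exact min_le_right _ _
        _ = (lam m * (m:ℝ) ^ p) / (2 ^ j) ^ p := by rw [mul_one_div, inv_div, div_pow]; ring
        _ ≤ _ := by
          rw [div_le_iff₀ (by positivity)]
          linarith
  have l1 := hpos 1
  have l0 := hpos 0
  refine ⟨(1 + lam 0 / lam 1) * 2 ^ p, by positivity, fun n j => ?_⟩
  have hl := hpos (2 ^ j)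
  by_cases hn : n = 0
  · subst hn
    have := main 1 j le_rfl
    simp only [Nat.cast_one] at this
    simp only [Int.natAbs_zero, Int.cast_zero, abs_zero, zero_le_one, max_eq_right]
    calc _ = lam 0 / lam 1 * (lam 1 * rh (1 / 1) j ^ p) := by field_simp
      _ ≤ lam 0 / lam 1 * (2 ^ p * lam (2 ^ j)) := by gcongr
      _ ≤ _ := by
        rw [← mul_assoc]; gcongr; linarith
  · have := main n.natAbs j (by omega)
    have h1 : 1 ≤ |(n:ℝ)| := by exact_mod_cast Int.one_le_abs hn
    rw [Nat.cast_natAbs, Int.cast_abs] at this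
    rw [max_eq_left h1]
    refine this.trans ?_
    gcongr
    have : 0 < lam 0 / lam 1 := by positivity
    nlinarith [show (0:ℝ) < 2 ^ p by positivity]

lemma quad (lam : ℕ → ℝ) (hpos : ∀ n, 0 < lam n) (p : ℕ) (D K : ℝ) (hD : 0 < D) (hK : 0 < K)
    (hgr : ∀ (n : ℤ) (j : ℕ), lam n.natAbs * rh (1 / max |(n:ℝ)| 1) j ^ p ≤ D * lam (2 ^ j))
    (J L : ℕ) (hJL : J ≤ L) (c : ℕ → ℝ) (hc : ∀ j, 0 ≤ c j) (a : ℤ → ℂ)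
    (ha : ∀ n, ‖a n‖ ≤ ∑ j ∈ Finset.Ico J L,
      c j * (K / 2 ^ j * rh (1 / max |(n:ℝ)| 1) j ^ (p + 2))) (S : Finset ℤ) :
    ∑ n ∈ S, lam n.natAbs * ‖a n‖ ^ 2 ≤
      96 * K ^ 2 * D * ∑ j ∈ Finset.Ico J L, c j ^ 2 * lam (2 ^ j) / 2 ^ j := by
  have t0 : ∀ n : ℤ, 0 < 1 / max |(n:ℝ)| 1 := fun n => by positivity
  have r0 : ∀ (n : ℤ) j, 0 ≤ rh (1 / max |(n:ℝ)| 1) j := fun n j => rh_nonneg (t0 n).le j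
  have r1 : ∀ (n : ℤ) j, rh (1 / max |(n:ℝ)| 1) j ≤ 1 := fun n j => rh_le_one (t0 n) j
  have step : ∀ n : ℤ, lam n.natAbs * ‖a n‖ ^ 2 ≤ ∑ j ∈ Finset.Ico J L,
      6 * K ^ 2 * D * (c j ^ 2 * lam (2 ^ j) / (2 ^ j) ^ 2) * rh (1 / max |(n:ℝ)| 1) j ^ 2 := by
    intro n
    have hl := hpos n.natAbs
    have h1 : ‖a n‖ ^ 2 ≤ (∑ j ∈ Finset.Ico J L, rh (1 / max |(n:ℝ)| 1) j) *
        ∑ j ∈ Finset.Ico J L, c j ^ 2 * K ^ 2 / (2 ^ j) ^ 2 *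
          rh (1 / max |(n:ℝ)| 1) j ^ (2 * p + 3) := by
      refine (pow_le_pow_left₀ (norm_nonneg _) (ha n) 2).trans ?_
      apply Finset.sum_sq_le_sum_mul_sum_of_sq_eq_mul
      · intro j _; exact r0 n j
      · intro j _; have := r0 n j; positivity
      · intro j _; field_simp; ring
    have h2 : ‖a n‖ ^ 2 ≤ 6 * ∑ j ∈ Finset.Ico J L, c j ^ 2 * K ^ 2 / (2 ^ j) ^ 2 *
          rh (1 / max |(n:ℝ)| 1) j ^ (2 * p + 3) := by
      refine h1.trans (mul_le_mul_of_nonneg_right (rh_sum (t0 n) J L hJL) ?_)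
      apply Finset.sum_nonneg
      intro j _; have := r0 n j; positivity
    refine (mul_le_mul_of_nonneg_left h2 hl.le).trans ?_
    rw [Finset.mul_sum, Finset.mul_sum]
    apply Finset.sum_le_sum
    intro j _
    have e1 := hgr n j
    have e2 := r0 n j
    have e3 := r1 n j
    generalize rh (1 / max |(n:ℝ)| 1) j = r at *
    have hq : r ^ (2 * p + 3) ≤ r ^ p * r ^ 2 := by
      rw [← pow_add]; exact pow_le_pow_of_le_one e2 e3 (by omega)
    calc _ ≤ lam n.natAbs * (6 * (c j ^ 2 * K ^ 2 / (2 ^ j) ^ 2 * (r ^ p * r ^ 2))) := by gcongr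
      _ = 6 * (c j ^ 2 * K ^ 2 / (2 ^ j) ^ 2) * r ^ 2 * (lam n.natAbs * r ^ p) := by ring
      _ ≤ 6 * (c j ^ 2 * K ^ 2 / (2 ^ j) ^ 2) * r ^ 2 * (D * lam (2 ^ j)) := by gcongr
      _ = _ := by ring
  refine (Finset.sum_le_sum fun n _ => step n).trans ?_
  rw [Finset.sum_comm, Finset.mul_sum]
  apply Finset.sum_le_sum
  intro j _
  have hl := hpos (2 ^ j)
  rw [← Finset.mul_sum]
  calc _ ≤ 6 * K ^ 2 * D * (c j ^ 2 * lam (2 ^ j) / (2 ^ j) ^ 2) * (16 * 2 ^ j) := by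
        gcongr; exact rh_sq_sum j S
    _ = _ := by field_simp; ring

lemma w_div (lam : ℕ → ℝ) (hpos : ∀ n, 0 < lam n)
    (hdiv : ¬ Summable (fun n : ℕ => 1 / lam (n + 1))) (C : ℝ) (hC : 1 < C)
    (hdbl : ∀ n k : ℕ, 1 ≤ n → n ≤ k → k ≤ 2 * n →
      C⁻¹ * lam n ≤ lam k ∧ lam k ≤ C * lam n) :
    ¬ Summable (fun j : ℕ => min 1 ((2:ℝ) ^ j / lam (2 ^ j))) := by
  intro hs
  apply hdiv
  have hs2 : Summable (fun j : ℕ => (2:ℝ) ^ j / lam (2 ^ j)) := by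
    have h1 := hs.tendsto_atTop_zero
    have h2 : ∀ᶠ j : ℕ in atTop, min 1 ((2:ℝ) ^ j / lam (2 ^ j)) < 1 :=
      h1.eventually (gt_mem_nhds one_pos)
    refine hs.congr_atTop ?_
    filter_upwards [h2] with j hj
    rcases min_lt_iff.1 hj with h | h
    · exact absurd h (lt_irrefl _)
    · exact min_eq_right h.le
  have hnn : ∀ j : ℕ, 0 ≤ (2:ℝ) ^ j / lam (2 ^ j) := fun j => by have := hpos (2 ^ j); positivity
  have hblock : ∀ k : ℕ, ∑ n ∈ Finset.Ico 1 (2 ^ k), 1 / lam n ≤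
      C * ∑ j ∈ Finset.range k, (2:ℝ) ^ j / lam (2 ^ j) := by
    intro k
    induction k with
    | zero => simp
    | succ k ih =>
      rw [← Finset.sum_Ico_consecutive _ (Nat.one_le_two_pow (n := k))
        (Nat.pow_le_pow_right (by norm_num) (Nat.le_succ k)), Finset.sum_range_succ, mul_add]
      refine add_le_add ih ?_
      have : ∀ n ∈ Finset.Ico (2 ^ k) (2 ^ (k + 1)), 1 / lam n ≤ C / lam (2 ^ k) := by
        intro n hn
        rw [Finset.mem_Ico] at hn
        have := (hdbl (2 ^ k) n Nat.one_le_two_pow hn.1 (by rw [pow_succ] at hn; omega)).1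
        rw [inv_mul_le_iff₀ (by linarith)] at this
        rw [div_le_div_iff₀ (hpos _) (hpos _)]; linarith
      refine (Finset.sum_le_card_nsmul _ _ _ this).trans (le_of_eq ?_)
      rw [Nat.card_Ico, pow_succ, nsmul_eq_mul, show 2 ^ k * 2 - 2 ^ k = 2 ^ k by omega]
      push_cast; ring
  apply summable_of_sum_range_le (c := C * ∑' j : ℕ, (2:ℝ) ^ j / lam (2 ^ j))
  · intro n; exact (one_div_pos.2 (hpos _)).le
  · intro n
    have e : ∑ i ∈ Finset.range n, 1 / lam (i + 1) = ∑ i ∈ Finset.Ico 1 (n + 1), 1 / lam i := by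
      rw [Finset.range_eq_Ico, Finset.sum_Ico_add' (fun i => 1 / lam i) 0 n 1, zero_add]
    rw [e]
    calc _ ≤ ∑ i ∈ Finset.Ico 1 (2 ^ n), 1 / lam i := by
          apply Finset.sum_le_sum_of_subset_of_nonneg
          · exact Finset.Ico_subset_Ico_right Nat.lt_two_pow_self
          · intro i _ _; exact (one_div_pos.2 (hpos _)).le
      _ ≤ _ := hblock n
      _ ≤ _ := by
        gcongr
        exact hs2.sum_le_tsum _ (fun j _ => hnn j)

def FC (u : ℝ → ℝ) (n : ℤ) : ℂ :=
  ∫ x in (0:ℝ)..1, Complex.exp (-(2 * Real.pi * Complex.I * n * x)) * (u x : ℂ)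

lemma key (lam : ℕ → ℝ) (hpos : ∀ n, 0 < lam n)
    (hdiv : ¬ Summable (fun n : ℕ => 1 / lam (n + 1)))
    (hdbl : ∃ C : ℝ, 1 < C ∧ ∀ n k : ℕ, 1 ≤ n → n ≤ k → k ≤ 2 * n →
      C⁻¹ * lam n ≤ lam k ∧ lam k ≤ C * lam n)
    (g : ℝ → ℝ) (hg : ContDiff ℝ ∞ g) (x0 : ℝ) (h0 : 0 < x0) (h1 : x0 < 1) (ε : ℝ) (hε : 0 < ε) :
    ∃ φ : ℝ → ℝ, ContDiff ℝ ∞ φ ∧ (∀ x, φ x ≤ 1) ∧ (∀ x, -ε ≤ φ x) ∧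
      (∀ᶠ x in 𝓝 x0, φ x = 1) ∧ (∀ x, ε < |x - x0| → φ x = 0) ∧
      ∀ S : Finset ℤ, ∑ n ∈ S, lam n.natAbs * ‖FC (fun x => g x * φ x) n‖ ^ 2 ≤ ε ^ 2 := by
  obtain ⟨C, hC, hdbl⟩ := hdbl
  obtain ⟨p, hp⟩ := pow_unbounded_of_one_lt C (one_lt_two (α := ℝ))
  obtain ⟨D, hD, hgr⟩ := growth lam hpos C p hC hp.le hdbl
  obtain ⟨ψ, hψ, hle, r, hr, hr1, hone⟩ := exists_psi (p + 2)
  obtain ⟨M, hM, hb⟩ := PP_bdd (PP_zero hψ)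
  obtain ⟨K, hK, hII⟩ := II_rh x0 (p + 2) g ψ hg hψ
  have hψs := (PP_zero hψ).1
  have hψz := (PP_zero hψ).2
  obtain ⟨J, hJ⟩ := pow_unbounded_of_one_lt (1 / x0 + 1 / (1 - x0) + 1 / ε) (one_lt_two (α := ℝ))
  have h1' : 0 < 1 - x0 := by linarith
  have i1 : 0 < 1 / x0 := by positivity
  have i2 : 0 < 1 / (1 - x0) := by positivity
  have i3 : 0 < 1 / ε := by positivity
  have hJj : ∀ j, J ≤ j → 1 / x0 + 1 / (1 - x0) + 1 / ε < 2 ^ j := fun j hj =>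
    hJ.trans_le (pow_le_pow_right₀ (by norm_num) hj)
  have c0 : ∀ j, J ≤ j → 1 < 2 ^ j * x0 := fun j hj => by
    rw [← div_lt_iff₀ h0]; linarith [hJj j hj]
  have c1 : ∀ j, J ≤ j → 1 < 2 ^ j - 2 ^ j * x0 := fun j hj => by
    have : 1 < 2 ^ j * (1 - x0) := by rw [← div_lt_iff₀ h1']; linarith [hJj j hj]
    linarith
  have c2 : ∀ j, J ≤ j → 1 < 2 ^ j * ε := fun j hj => by
    rw [← div_lt_iff₀ hε]; linarith [hJj j hj]
  let w : ℕ → ℝ := fun j => min 1 ((2:ℝ) ^ j / lam (2 ^ j))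
  have hw0 : ∀ j, 0 < w j := fun j => by
    have := hpos (2 ^ j)
    exact lt_min one_pos (by positivity)
  have hw1 : ∀ j, w j ≤ 1 := fun j => min_le_left _ _
  have hw2 : ∀ j, w j * lam (2 ^ j) / 2 ^ j ≤ 1 := fun j => by
    have h3 : w j ≤ (2:ℝ) ^ j / lam (2 ^ j) := min_le_right _ _
    rw [le_div_iff₀ (hpos _)] at h3
    rw [div_le_one (by positivity)]; exact h3
  have hwd := (not_summable_iff_tendsto_nat_atTop_of_nonneg (fun j => (hw0 j).le)).1
    (w_div lam hpos hdiv C hC hdbl)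
  set R : ℝ := 1 + 96 * K ^ 2 * D / ε ^ 2 + 6 * M / r / ε with hR
  obtain ⟨L, hL1, hL2⟩ := ((hwd.eventually_ge_atTop
    (R + ∑ j ∈ Finset.range J, w j)).and (eventually_ge_atTop J)).exists
  set W : ℝ := ∑ j ∈ Finset.Ico J L, w j with hW
  have hWR : R ≤ W := by
    rw [hW, Finset.sum_Ico_eq_sub _ hL2]; linarith
  have hR1 : 0 < 96 * K ^ 2 * D / ε ^ 2 := by positivity
  have hR2 : 0 < 6 * M / r / ε := by positivity
  have hW0 : 0 < W := by linarith
  have hs1 : ∑ j ∈ Finset.Ico J L, w j / W = 1 := by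
    rw [← Finset.sum_div]; exact div_self hW0.ne'
  have hcj : ∀ j, 0 ≤ w j / W := fun j => (div_pos (hw0 j) hW0).le
  refine ⟨fun x => ∑ j ∈ Finset.Ico J L, w j / W * ψ (2 ^ j * x - 2 ^ j * x0), ?_, ?_, ?_, ?_, ?_, ?_⟩
  · apply ContDiff.sum
    intro j _
    exact contDiff_const.mul (hψs.comp ((contDiff_const.mul contDiff_id).sub contDiff_const))
  · intro x
    rw [← hs1]
    exact Finset.sum_le_sum fun j _ => mul_le_of_le_one_right (hcj j) (hle _)
  · intro x
    by_cases hx : x = x0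
    · subst hx
      have : ∀ j, ψ (2 ^ j * x - 2 ^ j * x) = 1 := fun j => hone _ (by simp [hr.le])
      simp only [this, mul_one, hs1]
      linarith
    have hy : 0 < |x - x0| := abs_pos.2 (sub_ne_zero.2 hx)
    have hlow : ∀ j, -(M / r) * rh |x - x0| j ≤ ψ (2 ^ j * x - 2 ^ j * x0) := by
      intro j
      have ht : |2 ^ j * x - 2 ^ j * x0| = 2 ^ j * |x - x0| := by
        rw [← mul_sub, abs_mul, abs_of_pos (by positivity)]
      have hrn := rh_nonneg hy.le j
      have hmr : 0 < M / r := by positivity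
      have hneg : -(M / r) * rh |x - x0| j ≤ 0 := by nlinarith
      unfold rh at hneg ⊢
      rw [← ht] at hneg ⊢
      generalize 2 ^ j * x - 2 ^ j * x0 = t at *
      by_cases t1 : |t| ≤ r
      · rw [hone t t1]; linarith
      by_cases t2 : 1 < |t|
      · rw [hψz t t2]; exact hneg
      push Not at t1 t2
      have : r ≤ min |t| |t|⁻¹ := le_min t1.le
        (hr1.le.trans ((one_le_inv₀ (by linarith)).2 t2))
      have h5 : M ≤ M / r * min |t| |t|⁻¹ := by
        calc M = M / r * r := by field_simp
          _ ≤ _ := by gcongr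
      linarith [(abs_le.1 (hb t)).1]
    calc -ε ≤ -(M / r / W * 6) := by
          have : M / r / W * 6 = 6 * M / r / W := by ring
          rw [this, neg_le_neg_iff, div_le_iff₀ hW0]
          have : 6 * M / r / ε ≤ W := by linarith
          rw [div_le_iff₀ hε] at this; linarith
      _ ≤ -(M / r / W * ∑ j ∈ Finset.Ico J L, rh |x - x0| j) := by
          gcongr; exact rh_sum hy J L hL2
      _ = ∑ j ∈ Finset.Ico J L, 1 / W * (-(M / r) * rh |x - x0| j) := by
          rw [Finset.mul_sum, ← Finset.sum_neg_distrib]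
          apply Finset.sum_congr rfl; intros; ring
      _ ≤ ∑ j ∈ Finset.Ico J L, w j / W * (-(M / r) * rh |x - x0| j) := by
          apply Finset.sum_le_sum
          intro j _
          have hrn := rh_nonneg hy.le j
          have hmr : 0 < M / r := by positivity
          have hneg : -(M / r) * rh |x - x0| j ≤ 0 := by nlinarith
          apply mul_le_mul_of_nonpos_right _ hneg
          gcongr; exact hw1 j
      _ ≤ _ := Finset.sum_le_sum fun j _ => mul_le_mul_of_nonneg_left (hlow j) (hcj j)
  · have : ∀ᶠ x in 𝓝 x0, ∀ j ∈ Finset.Ico J L, |2 ^ j * x - 2 ^ j * x0| < r := by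
      rw [Filter.eventually_all_finset]
      intro j _
      have hcont : ContinuousAt (fun x : ℝ => |2 ^ j * x - 2 ^ j * x0|) x0 := by fun_prop
      exact hcont.eventually (gt_mem_nhds (by simpa using hr))
    filter_upwards [this] with x hx
    rw [← hs1]
    apply Finset.sum_congr rfl
    intro j hj
    rw [hone _ (hx j hj).le, mul_one]
  · intro x hx
    apply Finset.sum_eq_zero
    intro j hj
    rw [hψz, mul_zero]
    rw [← mul_sub, abs_mul, abs_of_pos (by positivity : (0:ℝ) < 2 ^ j)]
    have := c2 j (Finset.mem_Ico.1 hj).1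
    exact this.trans (by gcongr)
  · intro S
    have hFC : ∀ n : ℤ, FC (fun x => g x * ∑ j ∈ Finset.Ico J L,
        w j / W * ψ (2 ^ j * x - 2 ^ j * x0)) n =
        ∑ j ∈ Finset.Ico J L, ((w j / W : ℝ) : ℂ) * II x0 (2 ^ j) n g ψ := by
      intro n
      unfold FC II
      simp_rw [← intervalIntegral.integral_const_mul]
      rw [← intervalIntegral.integral_finsetSum]
      · congr 1
        funext x
        push_cast
        rw [Finset.mul_sum, Finset.mul_sum]
        apply Finset.sum_congr rfl; intros; ring
      · intro j _
        have := hψs.continuous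
        have := hg.continuous
        exact Continuous.intervalIntegrable (by fun_prop) _ _
    refine (quad lam hpos p D K hD hK hgr J L hL2 (fun j => w j / W) hcj _ (fun n => ?_) S).trans ?_
    · rw [hFC]
      refine (norm_sum_le _ _).trans (Finset.sum_le_sum fun j hj => ?_)
      rw [norm_mul, Complex.norm_real, Real.norm_of_nonneg (hcj j)]
      exact mul_le_mul_of_nonneg_left (hII j n (c0 j (Finset.mem_Ico.1 hj).1)
        (c1 j (Finset.mem_Ico.1 hj).1)) (hcj j)
    · have : ∑ j ∈ Finset.Ico J L, (w j / W) ^ 2 * lam (2 ^ j) / 2 ^ j ≤ 1 / W := by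
        calc _ ≤ ∑ j ∈ Finset.Ico J L, 1 / W * (w j / W) := by
              apply Finset.sum_le_sum
              intro j _
              calc _ = 1 / W * (w j / W) * (w j * lam (2 ^ j) / 2 ^ j) := by field_simp
                _ ≤ _ := by
                  have := hw0 j
                  exact mul_le_of_le_one_right (by positivity) (hw2 j)
          _ = _ := by rw [← Finset.mul_sum, hs1, mul_one]
      calc _ ≤ 96 * K ^ 2 * D * (1 / W) := by gcongr
        _ ≤ _ := by
          rw [mul_one_div, div_le_iff₀ hW0]
          have : 96 * K ^ 2 * D / ε ^ 2 ≤ W := by linarith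
          rw [div_le_iff₀ (by positivity)] at this; linarith

lemma exists_seq (lam : ℕ → ℝ) (hpos : ∀ n, 0 < lam n)
    (hdiv : ¬ Summable (fun n : ℕ => 1 / lam (n + 1)))
    (hdbl : ∃ C : ℝ, 1 < C ∧ ∀ n k : ℕ, 1 ≤ n → n ≤ k → k ≤ 2 * n →
      C⁻¹ * lam n ≤ lam k ∧ lam k ≤ C * lam n)
    (q : ℕ → ℝ) (hq : ∀ k, q k ∈ Set.Ioo (0:ℝ) 1) (ε : ℕ → ℝ) (hε : ∀ k, 0 < ε k) :
    ∃ f φ : ℕ → ℝ → ℝ, (∀ x, f 0 x = 1) ∧ (∀ k x, f (k+1) x = f k x * (1 - φ k x)) ∧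
      (∀ k, Continuous (f k)) ∧ (∀ k, Continuous (φ k)) ∧ (∀ k x, φ k x ≤ 1) ∧
      (∀ k x, -ε k ≤ φ k x) ∧ (∀ k, ∀ᶠ x in 𝓝 (q k), φ k x = 1) ∧
      (∀ k x, ε k < |x - q k| → φ k x = 0) ∧
      ∀ k, ∀ S : Finset ℤ,
        ∑ n ∈ S, lam n.natAbs * ‖FC (fun x => f k x * φ k x) n‖ ^ 2 ≤ ε k ^ 2 := by
  have step : ∀ (k : ℕ) (g : {g : ℝ → ℝ // ContDiff ℝ ∞ g}), _ := fun k g =>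
    key lam hpos hdiv hdbl g.1 g.2 (q k) (hq k).1 (hq k).2 (ε k) (hε k)
  choose Φ a1 a2 a3 a4 a5 a6 using step
  let F : ℕ → {g : ℝ → ℝ // ContDiff ℝ ∞ g} := fun k => Nat.rec ⟨fun _ => 1, contDiff_const⟩
    (fun k g => ⟨fun x => g.1 x * (1 - Φ k g x), g.2.mul (contDiff_const.sub (a1 k g))⟩) k
  exact ⟨fun k => (F k).1, fun k => Φ k (F k), fun x => rfl, fun k x => rfl,
    fun k => (F k).2.continuous, fun k => (a1 k (F k)).continuous, fun k => a2 k (F k),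
    fun k => a3 k (F k), fun k => a4 k (F k), fun k => a5 k (F k), fun k => a6 k (F k)⟩

lemma FC_one (n : ℤ) : FC (fun _ => 1) n = if n = 0 then 1 else 0 := by
  unfold FC
  split_ifs with h
  · subst h; simp
  · have hc : -(2 * Real.pi * Complex.I * n) ≠ (0:ℂ) := by
      simp [h, Real.pi_ne_zero, Complex.I_ne_zero]
    have := integral_exp_mul_complex (a := 0) (b := 1) hc
    simp only [Complex.ofReal_one, mul_one]
    simp only [← neg_mul] at this ⊢
    rw [this, div_eq_zero_iff]
    left
    have e := Complex.exp_int_mul_two_pi_mul_I (-n)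
    have e2 : -2 * (Real.pi:ℂ) * Complex.I * n * (1:ℝ) = ((-n : ℤ):ℂ) * (2 * Real.pi * Complex.I) := by
      push_cast; ring
    rw [e2, e]; simp

lemma FC_succ (f φ : ℝ → ℝ) (hf : Continuous f) (hφ : Continuous φ) (n : ℤ) :
    FC (fun x => f x * (1 - φ x)) n = FC f n + -FC (fun x => f x * φ x) n := by
  unfold FC
  rw [← sub_eq_add_neg, ← intervalIntegral.integral_sub (Continuous.intervalIntegrable (by fun_prop) _ _)
    (Continuous.intervalIntegrable (by fun_prop) _ _)]
  congr 1
  funext x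
  push_cast; ring

lemma mink (S : Finset ℤ) (l : ℤ → ℝ) (hl : ∀ n, 0 ≤ l n) (a b : ℤ → ℂ) (α β : ℝ) (hα : 0 < α)
    (hβ : 0 < β) (ha : ∑ n ∈ S, l n * ‖a n‖ ^ 2 ≤ α ^ 2) (hb : ∑ n ∈ S, l n * ‖b n‖ ^ 2 ≤ β ^ 2) :
    ∑ n ∈ S, l n * ‖a n + b n‖ ^ 2 ≤ (α + β) ^ 2 := by
  have h : ∀ n ∈ S, l n * ‖a n + b n‖ ^ 2 ≤
      (1 + β / α) * (l n * ‖a n‖ ^ 2) + (1 + α / β) * (l n * ‖b n‖ ^ 2) := by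
    intro n _
    have h1 : ‖a n + b n‖ ^ 2 ≤ (‖a n‖ + ‖b n‖) ^ 2 :=
      pow_le_pow_left₀ (norm_nonneg _) (norm_add_le _ _) 2
    have h2 : (‖a n‖ + ‖b n‖) ^ 2 ≤ (1 + β / α) * ‖a n‖ ^ 2 + (1 + α / β) * ‖b n‖ ^ 2 := by
      have : (1 + β / α) * ‖a n‖ ^ 2 + (1 + α / β) * ‖b n‖ ^ 2 - (‖a n‖ + ‖b n‖) ^ 2
          = (β * ‖a n‖ - α * ‖b n‖) ^ 2 / (α * β) := by field_simp; ring
      have h3 : 0 ≤ (β * ‖a n‖ - α * ‖b n‖) ^ 2 / (α * β) := by positivity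
      linarith
    have := mul_le_mul_of_nonneg_left (h1.trans h2) (hl n)
    linarith
  refine (Finset.sum_le_sum h).trans ?_
  rw [Finset.sum_add_distrib, ← Finset.mul_sum, ← Finset.mul_sum]
  calc _ ≤ (1 + β / α) * α ^ 2 + (1 + α / β) * β ^ 2 := by gcongr
    _ = _ := by field_simp; ring

lemma hm_eq : hm = (volume : Measure UnitAddCircle) := by
  rw [AddCircle.volume_eq_smul_haarAddCircle]; simp [hm]

def rep (y : UnitAddCircle) : ℝ := (AddCircle.equivIoc (1:ℝ) 0 y : ℝ)

lemma rep_mp : MeasurePreserving rep hm (volume.restrict (Set.Ioc (0:ℝ) 1)) := by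
  rw [hm_eq]
  have h1 := AddCircle.measurePreserving_equivIoc (1:ℝ) (a := 0)
  have h2 := measurePreserving_subtype_coe (μa := (volume : Measure ℝ))
    (measurableSet_Ioc (a := (0:ℝ)) (b := 0 + 1))
  have := h2.comp h1
  have e : Set.Ioc (0:ℝ) 1 = Set.Ioc (0:ℝ) (0 + 1) := by rw [zero_add]
  rw [e]
  exact this

lemma rep_coe {x : ℝ} (hx : x ∈ Set.Ioc (0:ℝ) 1) : rep (x : UnitAddCircle) = x := by
  unfold rep
  rw [AddCircle.equivIoc_coe_eq (by simpa using hx)]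

lemma coeff_eq (u : ℝ → ℝ) (n : ℤ) :
    fourierCoeff (fun y : UnitAddCircle => ((u (rep y) : ℝ) : ℂ)) n = FC u n := by
  rw [fourierCoeff_eq_intervalIntegral _ n 0]
  unfold FC
  rw [zero_add, one_div_one, one_smul]
  apply intervalIntegral.integral_congr_ae
  filter_upwards with x hx
  rw [Set.uIoc_of_le zero_le_one] at hx
  rw [rep_coe hx, fourier_coe_apply, smul_eq_mul]
  congr 2
  push_cast; ring

lemma exists_q : ∃ q : ℕ → ℝ, (∀ k, q k ∈ Set.Ioo (0:ℝ) 1) ∧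
    ∀ O : Set ℝ, IsOpen O → (O ∩ Set.Ioo (0:ℝ) 1).Nonempty → ∃ i, q i ∈ O := by
  have : Nonempty (Set.Ioo (0:ℝ) 1) := ⟨⟨1/2, by norm_num, by norm_num⟩⟩
  refine ⟨fun k => (TopologicalSpace.denseSeq (Set.Ioo (0:ℝ) 1) k : ℝ),
    fun k => Subtype.coe_prop _, ?_⟩
  rintro O hO ⟨z, hz1, hz2⟩
  have hd := TopologicalSpace.denseRange_denseSeq (Set.Ioo (0:ℝ) 1)
  obtain ⟨i, hi⟩ := hd.exists_mem_open (hO.preimage continuous_subtype_val) ⟨⟨z, hz2⟩, hz1⟩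
  exact ⟨i, hi⟩

lemma s_f0 (f φ : ℕ → ℝ → ℝ) (f0 : ∀ x, f 0 x = 1)
    (fs : ∀ k x, f (k + 1) x = f k x * (1 - φ k x))
    (p1 : ∀ k x, φ k x ≤ 1) : ∀ k x, 0 ≤ f k x := by
  intro k x
  induction k with
  | zero => rw [f0]; exact zero_le_one
  | succ k ih => rw [fs]; exact mul_nonneg ih (by linarith [p1 k x])

lemma s_f2 (f φ : ℕ → ℝ → ℝ) (f0 : ∀ x, f 0 x = 1)
    (fs : ∀ k x, f (k + 1) x = f k x * (1 - φ k x))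
    (ε : ℕ → ℝ) (hεd : ∀ k, ε k = 1 / 8 * (1 / 2) ^ k) (hε : ∀ k, 0 < ε k)
    (p1 : ∀ k x, φ k x ≤ 1) (p2 : ∀ k x, -ε k ≤ φ k x) (hf0 : ∀ k x, 0 ≤ f k x) : ∀ k x, f k x ≤ 2 - (1 / 2) ^ k := by
  intro k x
  induction k with
  | zero => rw [f0]; norm_num
  | succ k ih =>
    rw [fs]
    have a := p2 k x
    have b : (0:ℝ) < (1 / 2) ^ k := by positivity
    have hb1 : (1 / 2 : ℝ) ^ k ≤ 1 := pow_le_one₀ (by norm_num) (by norm_num)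
    rw [hεd] at a
    calc f k x * (1 - φ k x) ≤ (2 - (1 / 2) ^ k) * (1 + 1 / 8 * (1 / 2) ^ k) := by
          apply mul_le_mul ih (by linarith) (by linarith [p1 k x]) (by linarith)
      _ ≤ _ := by rw [pow_succ]; nlinarith

lemma s_norm (lam : ℕ → ℝ) (hpos : ∀ n, 0 < lam n) (f φ : ℕ → ℝ → ℝ) (f0 : ∀ x, f 0 x = 1)
    (fs : ∀ k x, f (k + 1) x = f k x * (1 - φ k x))
    (cf : ∀ k, Continuous (f k)) (cφ : ∀ k, Continuous (φ k))
    (ε : ℕ → ℝ) (hεd : ∀ k, ε k = 1 / 8 * (1 / 2) ^ k) (hε : ∀ k, 0 < ε k)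
    (p5 : ∀ k (S : Finset ℤ), ∑ n ∈ S, lam n.natAbs * ‖FC (fun x => f k x * φ k x) n‖ ^ 2 ≤ ε k ^ 2) :
    ∀ k (S : Finset ℤ), ∑ n ∈ S, lam n.natAbs * ‖FC (f k) n‖ ^ 2 ≤
      (lam 0 + 2 - (1 / 2) ^ k) ^ 2 := by
  have hl0 := hpos 0
  intro k S
  induction k with
  | zero =>
    have e : f 0 = fun _ => 1 := funext f0
    rw [e]
    have : ∀ n : ℤ, lam n.natAbs * ‖FC (fun _ => 1) n‖ ^ 2 = if n = 0 then lam 0 else 0 := by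
      intro n
      rw [FC_one]
      split_ifs with h <;> simp [h]
    simp_rw [this]
    rw [Finset.sum_ite_eq']
    split_ifs <;> nlinarith
  | succ k ih =>
    have b : (0:ℝ) < (1 / 2) ^ k := by positivity
    have hb1 : (1 / 2 : ℝ) ^ k ≤ 1 := pow_le_one₀ (by norm_num) (by norm_num)
    have e : f (k + 1) = fun x => f k x * (1 - φ k x) := funext (fs k)
    rw [e]
    simp_rw [FC_succ (f k) (φ k) (cf k) (cφ k)]
    refine (mink S (fun n => lam n.natAbs) (fun n => (hpos _).le) (FC (f k))
      (fun n => -FC (fun x => f k x * φ k x) n) _ _ (by linarith) (hε k) ih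
      (by simpa using p5 k S)).trans ?_
    have : 0 < ε k := hε k
    apply pow_le_pow_left₀ (by linarith)
    rw [hεd]
    rw [pow_succ]; linarith

lemma s_ball (q : ℕ → ℝ) (ε : ℕ → ℝ) (hεd : ∀ k, ε k = 1 / 8 * (1 / 2) ^ k) (hε : ∀ k, 0 < ε k) :
    ∑' k, (volume : Measure ℝ) (Metric.closedBall (q k) (ε k)) = ENNReal.ofReal (1/2) := by
  simp_rw [Real.volume_closedBall]
  rw [← ENNReal.ofReal_tsum_of_nonneg (fun k => by have := hε k; positivity)]
  · congr 1
    have : ∀ k, 2 * ε k = 1 / 4 * (1 / 2) ^ k := fun k => by rw [hεd]; ring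
    simp_rw [this]
    rw [tsum_mul_left, tsum_geometric_two]; norm_num
  · simp_rw [hεd]
    exact (summable_geometric_two.mul_left _).mul_left _

lemma s_lim (f φ : ℕ → ℝ → ℝ) (f0 : ∀ x, f 0 x = 1)
    (fs : ∀ k x, f (k + 1) x = f k x * (1 - φ k x))
    (q ε : ℕ → ℝ) (hz : ∀ k x, x ∉ Metric.closedBall (q k) (ε k) → φ k x = 0)
    (hball : ∑' k, (volume : Measure ℝ) (Metric.closedBall (q k) (ε k)) = ENNReal.ofReal (1/2))
    (fl : ℝ → ℝ) (hfl : ∀ x a, Tendsto (fun k => f k x) atTop (𝓝 a) → fl x = a) :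
    ∀ᵐ x : ℝ, Tendsto (fun k => f k x) atTop (𝓝 (fl x)) := by
  have := ae_eventually_notMem (μ := (volume : Measure ℝ))
    (s := fun k => Metric.closedBall (q k) (ε k)) (by rw [hball]; exact ENNReal.ofReal_ne_top)
  filter_upwards [this] with x hx
  obtain ⟨K, hK⟩ := eventually_atTop.1 hx
  have : ∀ k, K ≤ k → f k x = f K x := by
    intro k hk
    induction k, hk using Nat.le_induction with
    | base => rfl
    | succ k hk ih => rw [fs, hz k x (hK k hk), ih]; ring
  have ht : Tendsto (fun k => f k x) atTop (𝓝 (f K x)) :=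
    tendsto_const_nhds.congr' (by
      filter_upwards [eventually_ge_atTop K] with k hk using (this k hk).symm)
  rw [hfl x _ ht]
  exact ht

lemma s_one (f φ : ℕ → ℝ → ℝ) (f0 : ∀ x, f 0 x = 1)
    (fs : ∀ k x, f (k + 1) x = f k x * (1 - φ k x))
    (q ε : ℕ → ℝ) (hz : ∀ k x, x ∉ Metric.closedBall (q k) (ε k) → φ k x = 0)
    (fl : ℝ → ℝ) (hfl : ∀ x a, Tendsto (fun k => f k x) atTop (𝓝 a) → fl x = a)
    (x : ℝ) (hx : ∀ k, x ∉ Metric.closedBall (q k) (ε k)) : fl x = 1 := by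
  have : ∀ k, f k x = 1 := by
    intro k
    induction k with
    | zero => exact f0 x
    | succ k ih => rw [fs, hz k x (hx k), ih]; ring
  have ht : Tendsto (fun k => f k x) atTop (𝓝 1) := by simp [this]
  exact hfl x _ ht

lemma s_zero (f φ : ℕ → ℝ → ℝ) (f0 : ∀ x, f 0 x = 1)
    (fs : ∀ k x, f (k + 1) x = f k x * (1 - φ k x))
    (fl : ℝ → ℝ) (hfl : ∀ x a, Tendsto (fun k => f k x) atTop (𝓝 a) → fl x = a)
    (i : ℕ) (x : ℝ) (hx : φ i x = 1) : fl x = 0 := by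
  have : ∀ k, i + 1 ≤ k → f k x = 0 := by
    intro k hk
    induction k, hk using Nat.le_induction with
    | base => rw [fs, hx]; ring
    | succ k hk ih => rw [fs, ih]; ring
  have ht : Tendsto (fun k => f k x) atTop (𝓝 0) :=
    tendsto_const_nhds.congr' (by
      filter_upwards [eventually_ge_atTop (i+1)] with k hk using (this k hk).symm)
  exact hfl x _ ht

lemma s_conv (f : ℕ → ℝ → ℝ) (cf : ∀ k, Continuous (f k)) (hfb : ∀ k x, |f k x| ≤ 2) (fl : ℝ → ℝ)
    (hlim : ∀ᵐ x : ℝ, Tendsto (fun k => f k x) atTop (𝓝 (fl x))) :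
    ∀ n, Tendsto (fun k => FC (f k) n) atTop (𝓝 (FC fl n)) := by
  intro n
  unfold FC
  apply intervalIntegral.tendsto_integral_filter_of_dominated_convergence (fun _ => (2:ℝ))
  · refine Eventually.of_forall fun k => ?_
    have := cf k
    exact Continuous.aestronglyMeasurable (by fun_prop)
  · refine Eventually.of_forall fun k => ?_
    filter_upwards with x _
    rw [norm_mul]
    have : ‖Complex.exp (-(2 * Real.pi * Complex.I * n * x))‖ = 1 := by
      rw [Complex.norm_exp]; simp
    rw [this, one_mul, Complex.norm_real]
    exact hfb k x
  · exact intervalIntegrable_const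
  · filter_upwards [hlim] with x hx _
    exact ((Complex.continuous_ofReal.tendsto _).comp hx).const_mul _

lemma s_bd (lam : ℕ → ℝ) (hpos : ∀ n, 0 < lam n) (f : ℕ → ℝ → ℝ) (fl : ℝ → ℝ)
    (hconv : ∀ n, Tendsto (fun k => FC (f k) n) atTop (𝓝 (FC fl n)))
    (hnorm : ∀ k (S : Finset ℤ), ∑ n ∈ S, lam n.natAbs * ‖FC (f k) n‖ ^ 2 ≤
      (lam 0 + 2 - (1 / 2) ^ k) ^ 2) (S : Finset ℤ) :
    ∑ n ∈ S, ‖FC fl n‖ ^ 2 * lam n.natAbs ≤ (lam 0 + 2) ^ 2 := by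
  have hl0 := hpos 0
  have ht : Tendsto (fun k => ∑ n ∈ S, ‖FC (f k) n‖ ^ 2 * lam n.natAbs) atTop
      (𝓝 (∑ n ∈ S, ‖FC fl n‖ ^ 2 * lam n.natAbs)) :=
    tendsto_finsetSum _ fun n _ => ((hconv n).norm.pow 2).mul_const _
  refine le_of_tendsto' ht fun k => ?_
  have b : (0:ℝ) < (1 / 2) ^ k := by positivity
  have hb1 : (1 / 2 : ℝ) ^ k ≤ 1 := pow_le_one₀ (by norm_num) (by norm_num)
  simp_rw [mul_comm]
  exact (hnorm k S).trans (pow_le_pow_left₀ (by linarith) (by linarith) 2)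

lemma s_pos (q ε : ℕ → ℝ) (fl : ℝ → ℝ)
    (hball : ∑' k, (volume : Measure ℝ) (Metric.closedBall (q k) (ε k)) = ENNReal.ofReal (1/2))
    (hfl0 : ∀ᵐ x : ℝ, 0 ≤ fl x) (hfl2 : ∀ᵐ x : ℝ, ‖fl x‖ ≤ 2)
    (hflm : AEStronglyMeasurable fl volume)
    (hflone : ∀ x, (∀ k, x ∉ Metric.closedBall (q k) (ε k)) → fl x = 1) :
    0 < ∫ y, fl (rep y) ∂hm := by
  have e : ∫ y, fl (rep y) ∂hm = ∫ x in Set.Ioc (0:ℝ) 1, fl x := by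
    rw [← rep_mp.map_eq, integral_map rep_mp.aemeasurable]
    rw [rep_mp.map_eq]; exact hflm.restrict
  rw [e, integral_pos_iff_support_of_nonneg_ae (ae_restrict_of_ae hfl0)
    ((memLp_top_of_bound hflm.restrict 2 (ae_restrict_of_ae hfl2)).integrable le_top)]
  rw [pos_iff_ne_zero]
  intro h0
  rw [Measure.restrict_apply₀' measurableSet_Ioc.nullMeasurableSet] at h0
  have hsub : Set.Ioc (0:ℝ) 1 ⊆ (Function.support fl ∩ Set.Ioc (0:ℝ) 1) ∪
      ⋃ k, Metric.closedBall (q k) (ε k) := by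
    intro x hx
    by_cases h : ∀ k, x ∉ Metric.closedBall (q k) (ε k)
    · left
      refine ⟨?_, hx⟩
      rw [Function.mem_support, hflone x h]; exact one_ne_zero
    · right
      push Not at h
      exact Set.mem_iUnion.2 h
  have h1 := (measure_mono (μ := volume) hsub).trans (measure_union_le _ _)
  rw [h0, zero_add, Real.volume_Ioc] at h1
  have h2 := h1.trans (measure_iUnion_le _)
  rw [hball, ENNReal.ofReal_le_ofReal_iff (by norm_num)] at h2
  norm_num at h2

lemma s_int (q : ℕ → ℝ) (fl : ℝ → ℝ) (hq : ∀ k, q k ∈ Set.Ioo (0:ℝ) 1)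
    (hqd : ∀ O : Set ℝ, IsOpen O → (O ∩ Set.Ioo (0:ℝ) 1).Nonempty → ∃ i, q i ∈ O)
    (p3 : ∀ i, ∀ᶠ x in 𝓝 (q i), fl x = 0) :
    interior (measSupport fun y => fl (rep y)) = ∅ := by
  rw [Set.eq_empty_iff_forall_notMem]
  intro y hy
  -- a point of the dense sequence in the interior
  obtain ⟨i, hi⟩ : ∃ i, ((q i : ℝ) : UnitAddCircle) ∈
      interior (measSupport fun y => fl (rep y)) := by
    set V := interior (measSupport fun y => fl (rep y)) with hV
    have hVo : IsOpen V := isOpen_interior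
    have hcont : Continuous (fun x : ℝ => (x : UnitAddCircle)) := AddCircle.continuous_mk' 1
    have hO : IsOpen ((fun x : ℝ => (x : UnitAddCircle)) ⁻¹' V) := hVo.preimage hcont
    have hx0 : rep y ∈ Set.Ioc (0:ℝ) 1 := by
      have : rep y ∈ Set.Ioc (0:ℝ) (0 + 1) := (AddCircle.equivIoc (1:ℝ) 0 y).2
      rw [zero_add] at this; exact this
    have hxy : ((rep y : ℝ) : UnitAddCircle) = y := AddCircle.coe_equivIoc (p := (1:ℝ)) (a := 0)
    have hcl : rep y ∈ closure (Set.Ioo (0:ℝ) 1) := by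
      rw [closure_Ioo (by norm_num)]; exact ⟨hx0.1.le, hx0.2⟩
    obtain ⟨z, hz1, hz2⟩ := mem_closure_iff.1 hcl _ hO (by
      show ((rep y : ℝ) : UnitAddCircle) ∈ V
      rw [hxy]; exact hy)
    exact hqd _ hO ⟨z, hz1, hz2⟩
  have hi2 := interior_subset hi
  apply hi2
  obtain ⟨O, hO1, hO2, hO3⟩ := eventually_nhds_iff.1 (p3 i)
  refine ⟨(fun x : ℝ => (x : UnitAddCircle)) '' (O ∩ Set.Ioo 0 1), ⟨?_, ?_⟩, ?_⟩
  · exact QuotientAddGroup.isOpenMap_coe _ (hO2.inter isOpen_Ioo)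
  · filter_upwards with y' hy'
    obtain ⟨x, ⟨hx1, hx2⟩, rfl⟩ := hy'
    simp only
    rw [rep_coe ⟨hx2.1, hx2.2.le⟩]
    exact hO1 x hx1
  · exact ⟨q i, ⟨hO3, hq i⟩, rfl⟩

lemma s_nn (P : ℝ → Prop) (hP : ∀ᵐ x : ℝ, P x) : ∀ᵐ y ∂hm, P (rep y) := by
  have h : ∀ᵐ x ∂(volume.restrict (Set.Ioc (0:ℝ) 1)), P x := ae_restrict_of_ae hP
  exact rep_mp.quasiMeasurePreserving.tendsto_ae.eventually h

/-- if `Σ 1/λ_n = ∞` and `(λ_n)` is doubling, there is a nonnegative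
`f ∈ L^∞(𝕋)` with positive integral whose measure `f·m` has support with empty interior,
and with `Σ_{n ∈ ℤ} |f̂(n)|² λ_{|n|} < ∞`. -/
theorem statement2 (lam : ℕ → ℝ) (hpos : ∀ n, 0 < lam n)
    (hdiv : ¬ Summable (fun n : ℕ => 1 / lam (n + 1)))
    (hdbl : ∃ C : ℝ, 1 < C ∧ ∀ n k : ℕ, 1 ≤ n → n ≤ k → k ≤ 2 * n →
      C⁻¹ * lam n ≤ lam k ∧ lam k ≤ C * lam n) :
    ∃ f : UnitAddCircle → ℝ,
      MemLp f ⊤ hm ∧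
      (∀ᵐ x ∂hm, 0 ≤ f x) ∧
      0 < ∫ x, f x ∂hm ∧
      interior (measSupport f) = ∅ ∧
      Summable (fun n : ℤ =>
        ‖fourierCoeff (fun x => (f x : ℂ)) n‖ ^ 2 * lam n.natAbs) := by
  obtain ⟨q, hq, hqd⟩ := exists_q
  obtain ⟨ε, hεd⟩ : ∃ ε : ℕ → ℝ, ∀ k, ε k = 1 / 8 * (1 / 2) ^ k := ⟨_, fun _ => rfl⟩
  have hε : ∀ k, 0 < ε k := fun k => by rw [hεd]; positivity
  obtain ⟨f, φ, f0, fs, cf, cφ, p1, p2, p3, p4, p5⟩ :=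
    exists_seq lam hpos hdiv hdbl q hq ε hε
  have hf0 := s_f0 f φ f0 fs p1
  have hf2 := s_f2 f φ f0 fs ε hεd hε p1 p2 hf0
  have hfb : ∀ k x, |f k x| ≤ 2 := fun k x => by
    rw [abs_of_nonneg (hf0 k x)]
    have b : (0:ℝ) < (1 / 2) ^ k := by positivity
    linarith [hf2 k x]
  have hnorm := s_norm lam hpos f φ f0 fs cf cφ ε hεd hε p5
  obtain ⟨fl, hfl⟩ : ∃ fl : ℝ → ℝ, ∀ x a, Tendsto (fun k => f k x) atTop (𝓝 a) → fl x = a :=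
    ⟨fun x => limUnder atTop (fun k => f k x), fun x a h => h.limUnder_eq⟩
  have hball := s_ball q ε hεd hε
  have hz : ∀ k x, x ∉ Metric.closedBall (q k) (ε k) → φ k x = 0 := by
    intro k x hx
    apply p4
    rw [Metric.mem_closedBall, Real.dist_eq, not_le] at hx
    exact hx
  have hlim := s_lim f φ f0 fs q ε hz hball fl hfl
  have hfl0 : ∀ᵐ x : ℝ, 0 ≤ fl x := by
    filter_upwards [hlim] with x hx using ge_of_tendsto' hx (fun k => hf0 k x)
  have hfl2 : ∀ᵐ x : ℝ, ‖fl x‖ ≤ 2 := by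
    filter_upwards [hlim] with x hx using le_of_tendsto' hx.norm (fun k => hfb k x)
  have hflm : AEStronglyMeasurable fl volume :=
    aestronglyMeasurable_of_tendsto_ae atTop (fun k => (cf k).aestronglyMeasurable) hlim
  have hmem : MemLp (fun y => fl (rep y)) ⊤ hm := by
    have h1 : MemLp fl ⊤ (volume.restrict (Set.Ioc (0:ℝ) 1)) :=
      memLp_top_of_bound hflm.restrict 2 (ae_restrict_of_ae hfl2)
    exact h1.comp_measurePreserving rep_mp
  have hnn : ∀ᵐ y ∂hm, 0 ≤ fl (rep y) :=
    s_nn (fun x => 0 ≤ fl x) hfl0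
  have hbd := s_bd lam hpos f fl (s_conv f cf hfb fl hlim) hnorm
  refine ⟨fun y => fl (rep y), hmem, hnn,
    s_pos q ε fl hball hfl0 hfl2 hflm (s_one f φ f0 fs q ε hz fl hfl),
    s_int q fl hq hqd (fun i => (p3 i).mono fun x hx => s_zero f φ f0 fs fl hfl i x hx), ?_⟩
  refine summable_of_sum_le (c := (lam 0 + 2) ^ 2)
    (fun n => by have := hpos n.natAbs; positivity) fun S => ?_
  simp_rw [coeff_eq]
  exact hbd S
end
end

section
/- There exists a nondecreasing sequence of positive real numbers (λ_n)_{n≥0} with λ_n → +∞ and Σ_{n≥1} 1/λ_n = +∞, such that every f ∈ L²(𝕋, m) that is not m-a.e. zero and satisfies Σ_{n∈ℤ} |f̂(n)|² λ_{|n|} < ∞ has support of the measure f·m equal to all of 𝕋 (equivalently: f is not m-a.e. zero on any nonempty open subset of 𝕋). -/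
open MeasureTheory Filter Topology

noncomputable section

theorem comb (Φ : ℕ → ℝ) : ∃ lam : ℕ → ℝ, (∀ n, 0 < lam n) ∧ Monotone lam ∧
    Tendsto lam atTop atTop ∧ ¬ Summable (fun n : ℕ => 1 / lam (n + 1)) ∧
    ∀ M, ∃ N, M ≤ N ∧ Φ N ≤ lam (N + 1) := by
  classical
  let Ψ : ℕ → ℕ := fun N => N + 1 + ∑ j ∈ Finset.range (N + 1), ⌈|Φ j|⌉₊
  have hΨm : Monotone Ψ := by
    intro a b hab
    have : ∑ j ∈ Finset.range (a + 1), ⌈|Φ j|⌉₊ ≤ ∑ j ∈ Finset.range (b + 1), ⌈|Φ j|⌉₊ :=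
      Finset.sum_le_sum_of_subset (Finset.range_mono (by omega))
    simp only [Ψ]; omega
  have hΨN : ∀ N, N < Ψ N := by intro N; simp only [Ψ]; omega
  have hΨΦ : ∀ N, Φ N ≤ Ψ N := by
    intro N
    have h1 : ⌈|Φ N|⌉₊ ≤ ∑ j ∈ Finset.range (N + 1), ⌈|Φ j|⌉₊ :=
      Finset.single_le_sum (f := fun j => ⌈|Φ j|⌉₊) (by simp) (by simp)
    have h2 : ⌈|Φ N|⌉₊ ≤ Ψ N := by simp only [Ψ]; omega
    calc Φ N ≤ |Φ N| := le_abs_self _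
      _ ≤ (⌈|Φ N|⌉₊ : ℝ) := Nat.le_ceil _
      _ ≤ Ψ N := by exact_mod_cast h2
  let S : ℕ → ℕ := fun k => Nat.rec 0 (fun _ m => m + Ψ m) k
  have hS0 : S 0 = 0 := rfl
  have hS : ∀ k, S (k + 1) = S k + Ψ (S k) := fun k => rfl
  have hSm : StrictMono S := strictMono_nat_of_lt_succ (fun k => by
    have := hΨN (S k); rw [hS]; omega)
  let prev : ℕ → ℕ := fun n => Nat.rec 0 (fun n p => if n ∈ Set.range S then n else p) n
  have hp0 : prev 0 = 0 := rfl
  have hp : ∀ n, prev (n + 1) = if n ∈ Set.range S then n else prev n := fun n => rfl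
  have hple : ∀ n, prev n ≤ n := by
    intro n
    induction n with
    | zero => simp [hp0]
    | succ n ih => rw [hp]; split_ifs <;> omega
  have hplt : ∀ n, prev (n + 1) ≤ n := by
    intro n
    have := hple n
    rw [hp]; split_ifs <;> omega
  have hpm : Monotone prev := monotone_nat_of_le_succ (fun n => by
    have := hple n
    rw [hp]; split_ifs <;> omega)
  have hpr : ∀ n, prev n ∈ Set.range S := by
    intro n
    induction n with
    | zero => exact ⟨0, rfl⟩
    | succ n ih => rw [hp]; split_ifs with h <;> assumption
  have hpS : ∀ k, prev (S k + 1) = S k := by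
    intro k; rw [hp, if_pos ⟨k, rfl⟩]
  have hpk : ∀ k n, n < S (k + 1) → prev (n + 1) ≤ S k := by
    intro k n hn
    obtain ⟨j, hj⟩ := hpr (n + 1)
    have h1 := hplt n
    have : S j < S (k + 1) := by omega
    have : j < k + 1 := hSm.lt_iff_lt.mp this
    rw [← hj]; exact hSm.monotone (by omega)
  refine ⟨fun n => (Ψ (prev n) : ℝ), ?_, ?_, ?_, ?_, ?_⟩
  · intro n
    have := hΨN (prev n)
    show (0:ℝ) < (Ψ (prev n) : ℝ)
    exact_mod_cast (by omega : 0 < Ψ (prev n))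
  · intro a b hab
    show (Ψ (prev a) : ℝ) ≤ (Ψ (prev b) : ℝ)
    exact_mod_cast hΨm (hpm hab)
  · refine tendsto_natCast_atTop_atTop.comp ?_
    refine tendsto_atTop_atTop_of_monotone (hΨm.comp hpm) (fun b => ⟨S b + 1, ?_⟩)
    show b ≤ Ψ (prev (S b + 1))
    rw [hpS]
    exact (hSm.le_apply).trans (hΨN _).le
  · intro hsum
    have ht := hsum.hasSum.tendsto_sum_nat
    have h1 := ht.comp hSm.tendsto_atTop
    have h2 := ht.comp (hSm.tendsto_atTop.comp (tendsto_add_atTop_nat 1))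
    have h3 := h2.sub h1
    rw [sub_self] at h3
    have h4 : ∀ k, (1:ℝ) ≤ ∑ n ∈ Finset.range (S (k+1)), 1 / (Ψ (prev (n+1)) : ℝ)
        - ∑ n ∈ Finset.range (S k), 1 / (Ψ (prev (n+1)) : ℝ) := by
      intro k
      rw [← Finset.sum_Ico_eq_sub _ (hSm.monotone (Nat.le_succ k))]
      have hpos : (0:ℝ) < Ψ (S k) := by
        have := hΨN (S k)
        exact_mod_cast (by omega : 0 < Ψ (S k))
      calc (1:ℝ) = ∑ n ∈ Finset.Ico (S k) (S (k+1)), 1 / (Ψ (S k) : ℝ) := by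
            rw [Finset.sum_const, Nat.card_Ico, hS, Nat.add_sub_cancel_left, nsmul_eq_mul]
            field_simp
        _ ≤ _ := by
            refine Finset.sum_le_sum (fun n hn => ?_)
            have hn' := (Finset.mem_Ico.mp hn).2
            have := hΨN (prev (n+1))
            have h5 : (0:ℝ) < Ψ (prev (n+1)) := by
              exact_mod_cast (by omega : 0 < Ψ (prev (n+1)))
            exact one_div_le_one_div_of_le h5 (by exact_mod_cast hΨm (hpk k n hn'))
    have := ge_of_tendsto' h3 h4
    linarith
  · intro M
    refine ⟨S M, hSm.le_apply, ?_⟩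
    simp only [hpS]
    exact hΨΦ _

abbrev HL := Lp ℂ 2 (@AddCircle.haarAddCircle 1 _)

abbrev RU (U : Set UnitAddCircle) :=
  LpToLpRestrictCLM UnitAddCircle ℂ ℂ (@AddCircle.haarAddCircle 1 _) 2 U

def TP (N : ℕ) : (↥(Finset.Icc (-(N:ℤ)) N) → ℂ) →ₗ[ℂ] HL :=
  Fintype.linearCombination ℂ (fun n => (fourierBasis (T := 1) (n : ℤ) : HL))

theorem trig_inj (N : ℕ) (U : Set UnitAddCircle) (hU : IsOpen U) (hne : U.Nonempty)
    (c : ↥(Finset.Icc (-(N:ℤ)) N) → ℂ)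
    (h : ∀ x ∈ U, ∑ n, c n * fourier (n : ℤ) x = 0) : c = 0 := by
  classical
  obtain ⟨x₀, hx₀⟩ := hne
  have hinf : U.Infinite := by
    have : Nontrivial UnitAddCircle := by
      refine ⟨⟨0, ((1/2 : ℝ) : UnitAddCircle), ?_⟩⟩
      intro h
      have := (AddCircle.coe_eq_zero_iff (p := (1:ℝ))).mp h.symm
      obtain ⟨n, hn⟩ := this
      simp at hn
      have h2 : (2 * n : ℝ) = 1 := by rw [hn]; norm_num
      have h3 : 2 * n = 1 := by exact_mod_cast h2
      omega
    exact infinite_of_mem_nhds x₀ (hU.mem_nhds hx₀)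
  let q : Polynomial ℂ := ∑ n : ↥(Finset.Icc (-(N:ℤ)) N),
    Polynomial.C (c n) * Polynomial.X ^ ((n : ℤ) + N).toNat
  have hq : q = 0 := by
    refine Polynomial.eq_zero_of_infinite_isRoot q ?_
    have hinj : Function.Injective (fun x : UnitAddCircle => (AddCircle.toCircle x : ℂ)) :=
      Subtype.val_injective.comp (AddCircle.injective_toCircle one_ne_zero)
    refine (hinf.image hinj.injOn).mono ?_
    rintro _ ⟨x, hx, rfl⟩
    show Polynomial.eval _ q = 0
    simp only [q, Polynomial.eval_finsetSum, Polynomial.eval_mul, Polynomial.eval_C,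
      Polynomial.eval_pow, Polynomial.eval_X]
    have h1 : ∀ n : ↥(Finset.Icc (-(N:ℤ)) N),
        c n * (AddCircle.toCircle x : ℂ) ^ ((n : ℤ) + N).toNat
          = (c n * fourier (n : ℤ) x) * fourier (N : ℤ) x := by
      intro n
      have hn := Finset.mem_Icc.mp n.2
      have h2 : (((n : ℤ) + N).toNat : ℤ) = (n : ℤ) + N := Int.toNat_of_nonneg (by linarith)
      generalize ((n : ℤ) + N).toNat = k at h2
      rw [mul_assoc, ← fourier_add, ← h2, fourier_apply, natCast_zsmul, AddCircle.toCircle_nsmul]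
      simp
    rw [Finset.sum_congr rfl (fun n _ => h1 n), ← Finset.sum_mul, h x hx, zero_mul]
  funext m
  have hm := Finset.mem_Icc.mp m.2
  have hc : q.coeff ((m : ℤ) + N).toNat = c m := by
    simp only [q, Polynomial.finsetSum_coeff, Polynomial.coeff_C_mul, Polynomial.coeff_X_pow]
    rw [Finset.sum_eq_single m]
    · simp
    · intro b _ hb
      have hb' := Finset.mem_Icc.mp b.2
      rw [if_neg, mul_zero]
      intro h
      apply hb
      apply Subtype.ext
      omega
    · simp
  rw [← hc, hq]; simp

theorem TP_coe (N : ℕ) (c : ↥(Finset.Icc (-(N:ℤ)) N) → ℂ) :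
    (TP N c : UnitAddCircle → ℂ) =ᵐ[AddCircle.haarAddCircle]
      fun x => ∑ n, c n * fourier (n : ℤ) x := by
  have h0 : TP N c = ContinuousMap.toLp (E := ℂ) 2 AddCircle.haarAddCircle ℂ
      (∑ n, c n • fourier (n : ℤ)) := by
    simp [TP, Fintype.linearCombination_apply, map_sum, fourierLp, coe_fourierBasis]
  rw [h0]
  refine (ContinuousMap.coeFn_toLp _ _).trans (Eventually.of_forall fun x => ?_)
  simp

theorem exists_trig_const (N : ℕ) (U : Set UnitAddCircle) (hU : IsOpen U) (hne : U.Nonempty) :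
    ∃ K : ℝ, 0 ≤ K ∧ ∀ c, ‖c‖ ≤ K * ‖RU U (TP N c)‖ := by
  obtain ⟨K, -, hK⟩ := LinearMap.exists_antilipschitzWith
    ((RU U).toLinearMap ∘ₗ TP N) (by
      rw [LinearMap.ker_eq_bot']
      intro c hc
      apply trig_inj N U hU hne c
      have h1 := LpToLpRestrictCLM_coeFn ℂ U (TP N c)
      have hc' : RU U (TP N c) = 0 := hc
      rw [hc'] at h1
      have h2 := (Lp.coeFn_zero ℂ 2 ((@AddCircle.haarAddCircle 1 _).restrict U)).symm.trans h1
      have h3 := h2.trans (ae_restrict_of_ae (TP_coe N c))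
      have h4 := Measure.eqOn_open_of_ae_eq h3.symm hU (by fun_prop) (by fun_prop)
      intro x hx
      exact h4 hx)
  exact ⟨K, K.2, fun c => hK.le_mul_norm (map_zero _) c⟩

/-- tail estimate -/
theorem tail_bound (lam : ℕ → ℝ) (hpos : ∀ n, 0 < lam n) (hmono : Monotone lam) (g : HL)
    (hs : Summable (fun n : ℤ => ‖fourierCoeff g n‖ ^ 2 * lam n.natAbs)) (N : ℕ) :
    ‖TP N (fun n => fourierCoeff g n) - g‖ ^ 2 * lam (N + 1) ≤
      ∑' n : ℤ, ‖fourierCoeff g n‖ ^ 2 * lam n.natAbs := by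
  classical
  set d : HL := TP N (fun n => fourierCoeff g n) - g with hd
  have hP : TP N (fun n => fourierCoeff g n) =
      ∑ n ∈ Finset.Icc (-(N:ℤ)) N, fourierCoeff g n • (fourierBasis (T := 1) n : HL) := by
    rw [TP, Fintype.linearCombination_apply]
    exact Finset.sum_coe_sort (Finset.Icc (-(N:ℤ)) N)
      (fun n => fourierCoeff g n • (fourierBasis (T := 1) n : HL))
  have hcoef : ∀ m : ℤ, fourierBasis.repr d m =
      if m ∈ Finset.Icc (-(N:ℤ)) N then 0 else - fourierCoeff g m := by
    intro m
    have hg : inner ℂ (fourierBasis (T := 1) m : HL) g = fourierCoeff g m := by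
      rw [← HilbertBasis.repr_apply_apply, fourierBasis_repr]
    rw [HilbertBasis.repr_apply_apply, hd, inner_sub_right, hg, hP]
    split_ifs with hm
    · rw [Orthonormal.inner_right_sum fourierBasis.orthonormal _ hm, sub_self]
    · rw [inner_sum, Finset.sum_eq_zero, zero_sub]
      intro i hi
      rw [inner_smul_right, fourierBasis.orthonormal.2, mul_zero]
      rintro rfl; exact hm hi
  have hn : HasSum (fun m : ℤ => ‖fourierBasis.repr d m‖ ^ 2) (‖d‖ ^ 2) := by
    have := lp.hasSum_norm (p := 2) (by norm_num) (fourierBasis.repr d)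
    simpa using this
  refine hasSum_le ?_ (hn.mul_right (lam (N + 1))) hs.hasSum
  intro m
  rw [hcoef]
  split_ifs with hm
  · have := hpos m.natAbs
    have h0 : 0 ≤ ‖fourierCoeff g m‖ ^ 2 * lam m.natAbs := by positivity
    simpa using h0
  · rw [norm_neg]
    refine mul_le_mul_of_nonneg_left (hmono ?_) (by positivity)
    rw [Finset.mem_Icc] at hm
    omega

/-- there is a nondecreasing sequence of positive reals `(λ_n)` with
`λ_n → ∞` and `Σ_{n≥1} 1/λ_n = ∞` such that every `f ∈ L²(𝕋)` which is not a.e. zero and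
has `Σ_{n ∈ ℤ} |f̂(n)|² λ_{|n|} < ∞` is not a.e. zero on any nonempty open subset of `𝕋`,
i.e. the support of the measure `f·m` is all of `𝕋`. -/
theorem statement4 :
    ∃ lam : ℕ → ℝ, (∀ n, 0 < lam n) ∧ Monotone lam ∧ Tendsto lam atTop atTop ∧
      ¬ Summable (fun n : ℕ => 1 / lam (n + 1)) ∧
      ∀ f : UnitAddCircle → ℂ, MemLp f 2 hm →
        ¬ (f =ᵐ[hm] 0) →
        Summable (fun n : ℤ => ‖fourierCoeff f n‖ ^ 2 * lam n.natAbs) →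
        ∀ U : Set UnitAddCircle, IsOpen U → U.Nonempty →
          ¬ (∀ᵐ x ∂hm, x ∈ U → f x = 0) := by
  classical
  obtain ⟨B, hBc, hBe, hB⟩ := TopologicalSpace.exists_countable_basis UnitAddCircle
  have hBne : B.Nonempty := by
    obtain ⟨v, hv, -⟩ := hB.exists_subset_of_mem_open (Set.mem_univ (0 : UnitAddCircle)) isOpen_univ
    exact ⟨v, hv⟩
  obtain ⟨V, hV⟩ := hBc.exists_eq_range hBne
  have hVo : ∀ j, IsOpen (V j) := fun j => hB.isOpen (hV ▸ ⟨j, rfl⟩)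
  have hVn : ∀ j, (V j).Nonempty := fun j => by
    rw [Set.nonempty_iff_ne_empty]
    intro h
    exact hBe (by rw [hV]; exact ⟨j, h⟩)
  choose K hK0 hK using fun (N j : ℕ) => exists_trig_const N (V j) (hVo j) (hVn j)
  obtain ⟨lam, hpos, hmono, htend, hns, hlarge⟩ :=
    comb (fun N => ∑ j ∈ Finset.range (N + 1), N * (K N j * ‖RU (V j)‖) ^ 2)
  refine ⟨lam, hpos, hmono, htend, hns, ?_⟩
  intro f hf hf0 hs U hU hUne hae
  apply hf0
  obtain ⟨x, hx⟩ := hUne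
  obtain ⟨v, hv, -, hvU⟩ := hB.exists_subset_of_mem_open hx hU
  rw [hV] at hv
  obtain ⟨j, rfl⟩ := hv
  have hf' : MemLp f 2 (@AddCircle.haarAddCircle 1 _) := hf
  let g : HL := hf'.toLp f
  have hgf : (g : UnitAddCircle → ℂ) =ᵐ[AddCircle.haarAddCircle] f := hf'.coeFn_toLp
  have hco : ∀ n, fourierCoeff g n = fourierCoeff f n := fun n => by
    rw [fourierCoeff_congr_ae hgf]
  simp only [← hco] at hs
  have hRg : RU (V j) g = 0 := by
    rw [Lp.eq_zero_iff_ae_eq_zero]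
    have hgf2 : (g : UnitAddCircle → ℂ) =ᵐ[(@AddCircle.haarAddCircle 1 _).restrict (V j)] f :=
      ae_restrict_of_ae hgf
    refine (LpToLpRestrictCLM_coeFn ℂ (V j) g).trans (hgf2.trans ?_)
    rw [EventuallyEq, ae_restrict_iff' (hVo j).measurableSet]
    have hae' : ∀ᵐ x ∂(@AddCircle.haarAddCircle 1 _), x ∈ U → f x = 0 := hae
    filter_upwards [hae'] with x hx hxV using hx (hvU hxV)
  set C := ∑' n : ℤ, ‖fourierCoeff g n‖ ^ 2 * lam n.natAbs with hC
  have hzero : ∀ m : ℤ, fourierCoeff g m = 0 := by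
    intro m
    by_contra hm0
    have hp : 0 < ‖fourierCoeff g m‖ ^ 2 := by positivity
    obtain ⟨M, hM⟩ := exists_nat_gt (C / ‖fourierCoeff g m‖ ^ 2)
    obtain ⟨N, hN, hlN⟩ := hlarge (M + m.natAbs + j + 1)
    have hmem : m ∈ Finset.Icc (-(N:ℤ)) N := by rw [Finset.mem_Icc]; omega
    have htail := tail_bound lam hpos hmono g hs N
    rw [← hC] at htail
    set P := TP N (fun n => fourierCoeff g n) with hPdef
    have h1 : ‖fourierCoeff g m‖ ≤ K N j * ‖RU (V j)‖ * ‖P - g‖ := by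
      calc ‖fourierCoeff g m‖ ≤ ‖(fun n : ↥(Finset.Icc (-(N:ℤ)) N) => fourierCoeff g n)‖ :=
            norm_le_pi_norm (fun n : ↥(Finset.Icc (-(N:ℤ)) N) => fourierCoeff g n) ⟨m, hmem⟩
        _ ≤ K N j * ‖RU (V j) P‖ := hK N j _
        _ = K N j * ‖RU (V j) (P - g)‖ := by rw [map_sub, hRg, sub_zero]
        _ ≤ K N j * (‖RU (V j)‖ * ‖P - g‖) :=
            mul_le_mul_of_nonneg_left ((RU (V j)).le_opNorm _) (hK0 N j)
        _ = _ := by ring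
    have h2 : N * (K N j * ‖RU (V j)‖) ^ 2 ≤ lam (N + 1) := by
      refine le_trans ?_ hlN
      exact Finset.single_le_sum (f := fun j => (N:ℝ) * (K N j * ‖RU (V j)‖) ^ 2)
        (fun i _ => by positivity) (Finset.mem_range.mpr (by omega))
    have h3 : ‖fourierCoeff g m‖ ^ 2 ≤ (K N j * ‖RU (V j)‖) ^ 2 * ‖P - g‖ ^ 2 := by
      rw [← mul_pow]; exact pow_le_pow_left₀ (norm_nonneg _) h1 2
    have h4 : N * ‖fourierCoeff g m‖ ^ 2 ≤ C := by
      calc N * ‖fourierCoeff g m‖ ^ 2 ≤ N * ((K N j * ‖RU (V j)‖) ^ 2 * ‖P - g‖ ^ 2) := by gcongr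
        _ = ‖P - g‖ ^ 2 * (N * (K N j * ‖RU (V j)‖) ^ 2) := by ring
        _ ≤ ‖P - g‖ ^ 2 * lam (N + 1) := by gcongr
        _ ≤ C := htail
    rw [div_lt_iff₀ hp] at hM
    have h5 : (M:ℝ) ≤ N := by exact_mod_cast (by omega : M ≤ N)
    nlinarith
  have hg0 : g = 0 := by
    have : fourierBasis.repr g = 0 := by
      ext n
      rw [fourierBasis_repr, hzero]; rfl
    simpa using this
  have h6 : (g : UnitAddCircle → ℂ) =ᵐ[AddCircle.haarAddCircle] 0 := by
    rw [hg0]; exact Lp.coeFn_zero _ _ _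
  exact hgf.symm.trans h6
end
end

section
/- Let Φ : (0,∞) → (0,∞) be an increasing function. Then there exists a nondecreasing sequence of positive real numbers (λ_n)_{n≥0} with λ_n → +∞ and Σ_{n≥1} Φ(1/λ_n) = +∞, such that every f ∈ L²(𝕋, m) that is not m-a.e. zero and satisfies Σ_{n∈ℤ} |f̂(n)|² λ_{|n|} < ∞ has support of the measure f·m equal to all of 𝕋 (equivalently: f is not m-a.e. zero on any nonempty open subset of 𝕋). -/
open MeasureTheory Filter Topology

noncomputable section

lemma open_infinite {U : Set UnitAddCircle} (hU : IsOpen U) (hne : U.Nonempty) : U.Infinite := by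
  intro hfin
  have hcl : IsClopen U := ⟨hfin.isClosed, hU⟩
  have hun : U = Set.univ := hcl.eq_univ hne
  have : Nontrivial UnitAddCircle := by
    refine ⟨0, ((1/2 : ℝ) : UnitAddCircle), ?_⟩
    intro h
    have h2 := (AddCircle.coe_eq_zero_iff (1:ℝ) (x := (1/2:ℝ))).1 h.symm
    obtain ⟨n, hn⟩ := h2
    simp at hn
    have h3 : (2 * n : ℝ) = 1 := by rw [hn]; norm_num
    have h4 : 2 * n = 1 := by exact_mod_cast h3
    omega
  have := PreconnectedSpace.infinite (X := UnitAddCircle)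
  rw [hun] at hfin
  exact Set.infinite_univ hfin

/-- symmetric frequency window -/
def win (N : ℕ) : Finset ℤ := Finset.Ioo (-(N:ℤ)) N

lemma mem_win {N : ℕ} {n : ℤ} : n ∈ win N ↔ n.natAbs < N := by
  simp [win]; omega

lemma trig_zero {U : Set UnitAddCircle} (hU : U.Infinite) (N : ℕ) (c : win N → ℂ)
    (h : ∀ x ∈ U, ∑ n : win N, c n * fourier (n:ℤ) x = 0) : c = 0 := by
  set p : Polynomial ℂ := ∑ n : win N, Polynomial.monomial ((n:ℤ) + N).toNat (c n) with hp
  have hp0 : p = 0 := by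
    apply Polynomial.eq_zero_of_infinite_isRoot
    have hinj : Function.Injective (fun x : UnitAddCircle => (x.toCircle : ℂ)) := fun x y hxy =>
      AddCircle.injective_toCircle one_ne_zero (Subtype.ext hxy)
    refine (hU.image hinj.injOn).mono ?_
    rintro _ ⟨x, hx, rfl⟩
    have h1 := h x hx
    show p.IsRoot _
    rw [Polynomial.IsRoot.def, hp, Polynomial.eval_finsetSum]
    have hz : (x.toCircle : ℂ) ≠ 0 := Circle.coe_ne_zero _
    have : (x.toCircle : ℂ) ^ N * ∑ n : win N, c n * fourier (n:ℤ) x = 0 := by rw [h1, mul_zero]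
    rw [← this, Finset.mul_sum]
    refine Finset.sum_congr rfl fun n _ => ?_
    have hn := mem_win.1 n.2
    rw [Polynomial.eval_monomial, fourier_apply, AddCircle.toCircle_zsmul, Circle.coe_zpow,
      ← zpow_natCast, ← zpow_natCast, Int.toNat_of_nonneg (by omega), zpow_add₀ hz]
    ring
  funext m
  have h2 : p.coeff ((m:ℤ) + N).toNat = 0 := by rw [hp0]; simp
  rw [hp, Polynomial.finsetSum_coeff, Finset.sum_eq_single m] at h2
  · simpa using h2
  · intro b _ hb
    rw [Polynomial.coeff_monomial, if_neg]
    intro hh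
    have hn := mem_win.1 b.2
    have hm := mem_win.1 m.2
    exact hb (Subtype.ext (by omega))
  · simp

lemma quant {U : Set UnitAddCircle} (hU : IsOpen U) (hne : U.Nonempty) (N : ℕ) :
    ∃ K : ℝ, 0 ≤ K ∧ ∀ f : Lp ℂ 2 (AddCircle.haarAddCircle : Measure UnitAddCircle),
      (∀ᵐ x ∂(AddCircle.haarAddCircle : Measure UnitAddCircle), x ∈ U → f x = 0) →
      ∀ n ∈ win N, ‖fourierCoeff f n‖ ≤
        K * ‖f - ∑ m : win N, fourierCoeff f (m:ℤ) • fourierLp 2 (m:ℤ)‖ := by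
  set μ : Measure UnitAddCircle := AddCircle.haarAddCircle
  let Rs := LpToLpRestrictCLM UnitAddCircle ℂ ℂ μ 2 U
  let T : (win N → ℂ) →ₗ[ℂ] Lp ℂ 2 (μ.restrict U) :=
    Rs.toLinearMap ∘ₗ Fintype.linearCombination ℂ (fun n : win N => (fourierLp 2 (n:ℤ) : Lp ℂ 2 μ))
  have hT : LinearMap.ker T = ⊥ := by
    rw [LinearMap.ker_eq_bot']
    intro c hc
    apply trig_zero (open_infinite hU hne) N c
    have e1 : Fintype.linearCombination ℂ (fun n : win N => (fourierLp 2 (n:ℤ) : Lp ℂ 2 μ)) c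
        = ContinuousMap.toLp 2 μ ℂ (∑ n : win N, c n • fourier (n:ℤ)) := by
      rw [Fintype.linearCombination_apply, map_sum]
      simp only [map_smul]; rfl
    have e2 : Rs (ContinuousMap.toLp 2 μ ℂ (∑ n : win N, c n • fourier (n:ℤ))) = 0 := by
      rw [← e1]; exact hc
    have e3 := LpToLpRestrictCLM_coeFn ℂ U (ContinuousMap.toLp 2 μ ℂ (∑ n : win N, c n • fourier (n:ℤ)))
    have e4 := ae_restrict_of_ae (s := U)
      (ContinuousMap.coeFn_toLp (p := 2) (𝕜 := ℂ) μ (∑ n : win N, c n • fourier (n:ℤ)))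
    have e5 : (⇑(∑ n : win N, c n • fourier (n:ℤ) : C(UnitAddCircle, ℂ))) =ᵐ[μ.restrict U] (fun _ => 0) := by
      have e6 : ((0 : Lp ℂ 2 (μ.restrict U)) : UnitAddCircle → ℂ) =ᵐ[μ.restrict U] 0 := Lp.coeFn_zero _ _ _
      rw [← e2] at e6
      filter_upwards [e3, e4, e6] with x h3 h4 h6
      rw [← h4]
      exact h3.symm.trans h6
    have e7 := Measure.eqOn_open_of_ae_eq e5 hU (ContinuousMap.continuous _).continuousOn
      continuousOn_const
    intro x hx
    have := e7 hx
    simpa using this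
  obtain ⟨K, -, hK⟩ := LinearMap.exists_antilipschitzWith T hT
  refine ⟨K * ‖Rs‖, by positivity, ?_⟩
  intro f hf n hn
  let c : win N → ℂ := fun m => fourierCoeff f (m:ℤ)
  have h1 : ‖c‖ ≤ K * ‖T c‖ := by
    have := hK.le_mul_dist c 0
    simpa using this
  have hR : Rs f = 0 := by
    rw [Lp.eq_zero_iff_ae_eq_zero]
    have e3 := LpToLpRestrictCLM_coeFn ℂ U f
    have e4 := (ae_restrict_iff' hU.measurableSet).2 hf
    filter_upwards [e3, e4] with x h3 h4
    exact h3.trans h4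
  have h2 : T c = - Rs (f - ∑ m : win N, fourierCoeff f (m:ℤ) • fourierLp 2 (m:ℤ)) := by
    rw [map_sub, hR, zero_sub, neg_neg]
    show Rs (Fintype.linearCombination ℂ _ c) = _
    rw [Fintype.linearCombination_apply]
  have h3 := Rs.le_opNorm (f - ∑ m : win N, fourierCoeff f (m:ℤ) • fourierLp 2 (m:ℤ))
  calc ‖fourierCoeff f n‖ ≤ ‖c‖ := norm_le_pi_norm c ⟨n, hn⟩
    _ ≤ K * ‖T c‖ := h1
    _ ≤ _ := by
      rw [h2, norm_neg, mul_assoc]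
      exact mul_le_mul_of_nonneg_left h3 K.2

lemma parseval (f : Lp ℂ 2 (AddCircle.haarAddCircle : Measure UnitAddCircle)) :
    HasSum (fun i => ‖fourierCoeff f i‖ ^ 2) (‖f‖ ^ 2) := by
  simp_rw [← fourierBasis_repr]
  have H₁ : HasSum (fun i => ‖fourierBasis.repr f i‖ ^ 2) (‖fourierBasis.repr f‖ ^ 2) := by
    apply_mod_cast lp.hasSum_norm ?_ (fourierBasis.repr f)
    simp
  simpa using H₁

lemma coeff_rest (f : Lp ℂ 2 (AddCircle.haarAddCircle : Measure UnitAddCircle)) (N : ℕ) (n : ℤ) :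
    fourierCoeff (f - ∑ m : win N, fourierCoeff f (m:ℤ) • fourierLp 2 (m:ℤ) :
      Lp ℂ 2 (AddCircle.haarAddCircle : Measure UnitAddCircle)) n =
      if n ∈ win N then 0 else fourierCoeff f n := by
  rw [← fourierBasis_repr, Finset.sum_coe_sort (win N)
    (fun m => fourierCoeff f m • (fourierLp 2 m : Lp ℂ 2 (AddCircle.haarAddCircle : Measure UnitAddCircle)))]
  rw [HilbertBasis.repr_apply_apply, inner_sub_right, inner_sum, ← HilbertBasis.repr_apply_apply,
    fourierBasis_repr]
  simp only [inner_smul_right, coe_fourierBasis, orthonormal_iff_ite.1 orthonormal_fourier]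
  simp
  split_ifs <;> simp

lemma rest_bound (f : Lp ℂ 2 (AddCircle.haarAddCircle : Measure UnitAddCircle)) (N : ℕ)
    (lam : ℕ → ℝ) (hpos : ∀ n, 0 < lam n) (L : ℝ) (hL : 0 < L) (hlam : ∀ n, N ≤ n → L ≤ lam n)
    (hs : Summable (fun n : ℤ => ‖fourierCoeff f n‖ ^ 2 * lam n.natAbs)) :
    L * ‖f - ∑ m : win N, fourierCoeff f (m:ℤ) • fourierLp 2 (m:ℤ)‖ ^ 2 ≤
      ∑' n : ℤ, ‖fourierCoeff f n‖ ^ 2 * lam n.natAbs := by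
  have h1 := (parseval (f - ∑ m : win N, fourierCoeff f (m:ℤ) • fourierLp 2 (m:ℤ))).mul_left L
  refine hasSum_le (fun n => ?_) h1 hs.hasSum
  rw [coeff_rest]
  split_ifs with h
  · have := (hpos n.natAbs).le
    simp; positivity
  · rw [mul_comm]
    refine mul_le_mul_of_nonneg_left (hlam _ ?_) (by positivity)
    rw [mem_win] at h; omega

lemma basis_seq : ∃ V : ℕ → Set UnitAddCircle, (∀ j, IsOpen (V j)) ∧ (∀ j, (V j).Nonempty) ∧
    ∀ U : Set UnitAddCircle, IsOpen U → U.Nonempty → ∃ j, V j ⊆ U := by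
  obtain ⟨b, hc, he, hb⟩ := TopologicalSpace.exists_countable_basis UnitAddCircle
  have hbne : b.Nonempty := by
    obtain ⟨v, hv, -⟩ := hb.exists_subset_of_mem_open (Set.mem_univ (0:UnitAddCircle)) isOpen_univ
    exact ⟨v, hv⟩
  obtain ⟨V, hV⟩ := hc.exists_eq_range hbne
  have hm : ∀ j, V j ∈ b := fun j => hV ▸ Set.mem_range_self j
  refine ⟨V, fun j => hb.isOpen (hm j), fun j => ?_, fun U hU ⟨x, hx⟩ => ?_⟩
  · rw [Set.nonempty_iff_ne_empty]
    intro h; exact he (h ▸ hm j)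
  · obtain ⟨v, hv, -, hvU⟩ := hb.exists_subset_of_mem_open hx hU
    rw [hV] at hv
    obtain ⟨j, rfl⟩ := hv
    exact ⟨j, hvU⟩

/-- Existence of the block sequence. -/
lemma blocks (Φ : ℝ → ℝ) (hΦpos : ∀ x : ℝ, 0 < x → 0 < Φ x) (B : ℕ → ℕ → ℝ) (hB : ∀ k N, 0 ≤ B k N) :
    ∃ (lam : ℕ → ℝ) (N : ℕ → ℕ) (L : ℕ → ℝ), (∀ n, 0 < lam n) ∧ Monotone lam ∧
      Tendsto lam atTop atTop ∧ ¬ Summable (fun n : ℕ => Φ (1 / lam (n + 1))) ∧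
      StrictMono N ∧ (∀ k, 0 < L k) ∧ (∀ k n, N k ≤ n → L k ≤ lam n) ∧
      ∀ k, 1 ≤ k → k * B k (N k) ≤ L k := by
  have hM : ∀ L : ℝ, ∃ M : ℕ, 0 < L → 1 ≤ M * Φ (1 / L) := by
    intro L
    by_cases hL : 0 < L
    · obtain ⟨M, hM⟩ := exists_nat_ge (1 / Φ (1 / L))
      refine ⟨M, fun _ => ?_⟩
      have := hΦpos (1 / L) (by positivity)
      rwa [div_le_iff₀ this] at hM
    · exact ⟨0, fun h => absurd h hL⟩
  choose M hM using hM
  let st : ℕ → ℕ × ℝ := fun k => Nat.rec (0, 1) (fun k p =>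
    (p.1 + M p.2 + 1, p.2 + 1 + (k+1:ℕ) * B (k+1) (p.1 + M p.2 + 1))) k
  let N : ℕ → ℕ := fun k => (st k).1
  let L : ℕ → ℝ := fun k => (st k).2
  have hN0 : N 0 = 0 := rfl
  have hL0 : L 0 = 1 := rfl
  have hNs : ∀ k, N (k+1) = N k + M (L k) + 1 := fun k => rfl
  have hLs : ∀ k, L (k+1) = L k + 1 + (k+1:ℕ) * B (k+1) (N (k+1)) := fun k => rfl
  clear_value N L
  have hNm : StrictMono N := strictMono_nat_of_lt_succ fun k => by rw [hNs]; omega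
  have hLge : ∀ k, L k + 1 ≤ L (k+1) := fun k => by
    rw [hLs]; have := mul_nonneg (Nat.cast_nonneg (α := ℝ) (k+1)) (hB (k+1) (N (k+1))); linarith
  have hLm : Monotone L := monotone_nat_of_le_succ fun k => by linarith [hLge k]
  have hLk : ∀ k : ℕ, (k:ℝ) + 1 ≤ L k := by
    intro k
    induction k with
    | zero => simp [hL0]
    | succ k ih => push_cast; linarith [hLge k]
  have hLpos : ∀ k, 0 < L k := fun k => by have := hLk k; linarith [Nat.cast_nonneg (α := ℝ) k]
  let κ : ℕ → ℕ := fun n => Nat.findGreatest (fun k => N k ≤ n) n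
  have hκ1 : ∀ n, N (κ n) ≤ n := fun n =>
    Nat.findGreatest_spec (P := fun k => N k ≤ n) (Nat.zero_le n) (by simp [hN0])
  have hκ2 : ∀ n k, N k ≤ n → k ≤ κ n := fun n k h =>
    Nat.le_findGreatest ((hNm.id_le k).trans h) h
  have hκm : Monotone κ := fun a b h => hκ2 _ _ ((hκ1 a).trans h)
  have hκt : Tendsto κ atTop atTop := tendsto_atTop_atTop.2 fun k => ⟨N k, fun n h => hκ2 n k h⟩
  have hκe : ∀ k n, N k ≤ n → n < N (k+1) → κ n = k := by
    intro k n h1 h2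
    apply le_antisymm _ (hκ2 n k h1)
    by_contra hc
    have := hNm.monotone (show k + 1 ≤ κ n by omega)
    have := hκ1 n
    omega
  clear_value κ
  have hLt : Tendsto L atTop atTop := by
    refine tendsto_atTop_mono (fun k => ?_) (tendsto_natCast_atTop_atTop (R := ℝ))
    linarith [hLk k]
  refine ⟨fun n => L (κ n), N, L, fun n => hLpos _, hLm.comp hκm, hLt.comp hκt, ?_, hNm, hLpos,
    fun k n h => hLm (hκ2 n k h), ?_⟩
  · intro hs
    have hs' : Summable (fun n : ℕ => Φ (1 / L (κ n))) :=
      (summable_nat_add_iff (f := fun n : ℕ => Φ (1 / L (κ n))) 1).1 hs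
    have hpos : ∀ n, 0 < Φ (1 / L (κ n)) := fun n => hΦpos _ (one_div_pos.2 (hLpos _))
    have hge : ∀ k : ℕ, (k:ℝ) ≤ ∑ n ∈ Finset.range (N k), Φ (1 / L (κ n)) := by
      intro k
      induction k with
      | zero => simp [hN0]
      | succ k ih =>
        rw [← Finset.sum_range_add_sum_Ico _ (hNm.monotone (Nat.le_succ k))]
        have : ∑ n ∈ Finset.Ico (N k) (N (k+1)), Φ (1 / L (κ n))
            = ∑ n ∈ Finset.Ico (N k) (N (k+1)), Φ (1 / L k) := by
          refine Finset.sum_congr rfl fun n hn => ?_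
          rw [Finset.mem_Ico] at hn
          rw [hκe k n hn.1 hn.2]
        have h1 := hM (L k) (hLpos k)
        have h2 := hΦpos (1 / L k) (one_div_pos.2 (hLpos _))
        rw [Nat.succ_eq_add_one, this, Finset.sum_const, Nat.card_Ico, hNs, nsmul_eq_mul,
          show N k + M (L k) + 1 - N k = M (L k) + 1 by omega]
        push_cast
        nlinarith
    obtain ⟨k, hk⟩ := exists_nat_gt (∑' n, Φ (1 / L (κ n)))
    have := hs'.sum_le_tsum (Finset.range (N k)) (fun n _ => (hpos n).le)
    linarith [hge k]
  · intro k hk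
    obtain ⟨k, rfl⟩ : ∃ j, k = j + 1 := ⟨k - 1, by omega⟩
    rw [hLs]; linarith [hLpos k]

/-- for any positive increasing `Φ : (0,∞) → (0,∞)` there is a nondecreasing
sequence of positive reals `(λ_n)` with `λ_n → ∞` and `Σ_{n≥1} Φ(1/λ_n) = ∞`, such that
every `f ∈ L²(𝕋)` which is not a.e. zero and has `Σ_{n ∈ ℤ} |f̂(n)|² λ_{|n|} < ∞` is not
a.e. zero on any nonempty open subset of `𝕋` (the support of `f·m` is all of `𝕋`). -/
theorem statement5 (Φ : ℝ → ℝ) (hΦpos : ∀ x : ℝ, 0 < x → 0 < Φ x)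
    (hΦmono : MonotoneOn Φ (Set.Ioi (0 : ℝ))) :
    ∃ lam : ℕ → ℝ, (∀ n, 0 < lam n) ∧ Monotone lam ∧ Tendsto lam atTop atTop ∧
      ¬ Summable (fun n : ℕ => Φ (1 / lam (n + 1))) ∧
      ∀ f : UnitAddCircle → ℂ, MemLp f 2 hm →
        ¬ (f =ᵐ[hm] 0) →
        Summable (fun n : ℤ => ‖fourierCoeff f n‖ ^ 2 * lam n.natAbs) →
        ∀ U : Set UnitAddCircle, IsOpen U → U.Nonempty →
          ¬ (∀ᵐ x ∂hm, x ∈ U → f x = 0) := by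
  obtain ⟨V, hVo, hVn, hV⟩ := basis_seq
  choose K hK0 hK using fun j N => quant (hVo j) (hVn j) N
  let B : ℕ → ℕ → ℝ := fun k N => ∑ j ∈ Finset.range (k + 1), K j N ^ 2
  obtain ⟨lam, N, L, hpos, hmono, htend, hns, hN, hLpos, hL, hLB⟩ := blocks Φ hΦpos B
    (fun k N => Finset.sum_nonneg fun j _ => sq_nonneg _)
  refine ⟨lam, hpos, hmono, htend, hns, ?_⟩
  intro f hf hf0 hsum U hU hUne hzero
  apply hf0
  change MemLp f 2 AddCircle.haarAddCircle at hf
  change ∀ᵐ x ∂AddCircle.haarAddCircle, x ∈ U → f x = 0 at hzero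
  show f =ᵐ[AddCircle.haarAddCircle] 0
  have hfg := hf.coeFn_toLp
  set g := hf.toLp f with hg
  rw [← fourierCoeff_congr_ae hfg] at hsum
  obtain ⟨j, hj⟩ := hV U hU hUne
  have hgz : ∀ᵐ x ∂AddCircle.haarAddCircle, x ∈ V j → g x = 0 := by
    filter_upwards [hfg, hzero] with x h1 h2 h3
    rw [h1, h2 (hj h3)]
  set S := ∑' n : ℤ, ‖fourierCoeff g n‖ ^ 2 * lam n.natAbs with hS
  have hkey : ∀ (n : ℤ) (k : ℕ), j ≤ k → 1 ≤ k → n.natAbs < k → k * ‖fourierCoeff g n‖ ^ 2 ≤ S := by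
    intro n k hjk hk hnk
    have hn : n ∈ win (N k) := mem_win.2 (hnk.trans_le (hN.id_le k))
    have h1 := hK j (N k) g hgz n hn
    have h2 := rest_bound g (N k) lam hpos (L k) (hLpos k) (hL k) hsum
    rw [← hS] at h2
    have h3 : K j (N k) ^ 2 ≤ B k (N k) :=
      Finset.single_le_sum (f := fun j => K j (N k) ^ 2) (fun _ _ => sq_nonneg _)
        (Finset.mem_range.2 (by omega))
    have h4 := hLB k hk
    set r := ‖g - ∑ m : win (N k), fourierCoeff g (m:ℤ) • fourierLp 2 (m:ℤ)‖
    calc (k:ℝ) * ‖fourierCoeff g n‖ ^ 2 ≤ k * (K j (N k) * r) ^ 2 := by gcongr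
      _ = k * K j (N k) ^ 2 * r ^ 2 := by ring
      _ ≤ k * B k (N k) * r ^ 2 := by gcongr
      _ ≤ L k * r ^ 2 := by gcongr
      _ ≤ S := h2
  have hcoef : ∀ n : ℤ, ‖fourierCoeff g n‖ ^ 2 = 0 := by
    intro n
    by_contra hne
    have hp : 0 < ‖fourierCoeff g n‖ ^ 2 := lt_of_le_of_ne (sq_nonneg _) (Ne.symm hne)
    obtain ⟨k, hk⟩ := exists_nat_gt (S / ‖fourierCoeff g n‖ ^ 2)
    rw [div_lt_iff₀ hp] at hk
    have h1 := hkey n (k + j + n.natAbs + 1) (by omega) (by omega) (by omega)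
    have h2 : (k:ℝ) ≤ ((k + j + n.natAbs + 1 : ℕ) : ℝ) := by exact_mod_cast (by omega)
    nlinarith
  have hg0 : g = 0 := by
    have h1 := parseval g
    simp only [hcoef] at h1
    have h2 := h1.unique hasSum_zero
    simpa using h2
  have h0 : (g : UnitAddCircle → ℂ) =ᵐ[AddCircle.haarAddCircle] 0 := by
    rw [hg0]; exact Lp.coeFn_zero _ _ _
  exact hfg.symm.trans h0
end
end

section
/- Let (λ_n)_{n≥1} be positive real numbers satisfying the doubling condition: there exists C > 1 such that C⁻¹ λ_n ≤ λ_k ≤ C λ_n whenever n ≥ 1 and n ≤ k ≤ 2n. Then there exists a real number M₀ > 1 such that for every integer M > M₀ and every n ≥ 1 one has Σ_{j=1}^{n} j^{M-1}/λ_j ≤ 10 M₀ · n^{M}/λ_n. -/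
open Filter Topology

theorem aux7 (lam : ℕ → ℝ) (hpos : ∀ n, 1 ≤ n → 0 < lam n) (C : ℝ) (hC : 1 < C)
    (h : ∀ n k : ℕ, 1 ≤ n → n ≤ k → k ≤ 2 * n →
      C⁻¹ * lam n ≤ lam k ∧ lam k ≤ C * lam n) (K : ℕ) (hK : C ≤ 2 ^ K) (n : ℕ) :
    ∀ d j : ℕ, 1 ≤ j → j ≤ n → n - j ≤ d →
      lam n * (j : ℝ) ^ K ≤ C * (n : ℝ) ^ K * lam j := by
  intro d
  induction d with
  | zero =>
    intro j hj hjn hd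
    have : j = n := by omega
    subst this
    have h1 := hpos j hj
    have h2 : 0 ≤ (j : ℝ) ^ K * lam j := by positivity
    nlinarith
  | succ d ih =>
    intro j hj hjn hd
    by_cases hc : n ≤ 2 * j
    · have h1 := (h j n hj hjn hc).2
      have h2 : (j : ℝ) ^ K ≤ (n : ℝ) ^ K := by gcongr
      have h3 := hpos j hj
      calc lam n * (j : ℝ) ^ K ≤ (C * lam j) * (n : ℝ) ^ K := by gcongr
        _ = _ := by ring
    · have h1 := ih (2 * j) (by omega) (by omega) (by omega)
      have h2 := (h j (2 * j) hj (by omega) le_rfl).2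
      have h3 := hpos j hj
      have h4 := hpos n (by omega)
      push_cast at h1
      rw [mul_pow] at h1
      have h5 : C * (lam n * (j : ℝ) ^ K) ≤ C * (C * (n : ℝ) ^ K * lam j) := by
        calc C * (lam n * (j : ℝ) ^ K) ≤ 2 ^ K * (lam n * (j : ℝ) ^ K) := by gcongr
          _ = lam n * (2 ^ K * (j : ℝ) ^ K) := by ring
          _ ≤ C * (n : ℝ) ^ K * lam (2 * j) := h1
          _ ≤ C * (n : ℝ) ^ K * (C * lam j) := by gcongr
          _ = _ := by ring
      exact le_of_mul_le_mul_left h5 (by linarith)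

/-- if `(λ_n)_{n ≥ 1}` are positive and doubling, then there is `M₀ > 1` such
that for every integer `M > M₀` and every `n ≥ 1`,
`Σ_{j=1}^{n} j^{M-1}/λ_j ≤ 10 M₀ · n^M / λ_n`. -/
theorem statement7 (lam : ℕ → ℝ) (hpos : ∀ n, 1 ≤ n → 0 < lam n)
    (hdbl : ∃ C : ℝ, 1 < C ∧ ∀ n k : ℕ, 1 ≤ n → n ≤ k → k ≤ 2 * n →
      C⁻¹ * lam n ≤ lam k ∧ lam k ≤ C * lam n) :
    ∃ M₀ : ℝ, 1 < M₀ ∧ ∀ M : ℕ, M₀ < (M : ℝ) → ∀ n : ℕ, 1 ≤ n →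
      ∑ j ∈ Finset.Icc 1 n, (j : ℝ) ^ (M - 1) / lam j ≤
        10 * M₀ * ((n : ℝ) ^ M / lam n) := by
  obtain ⟨C, hC, h⟩ := hdbl
  obtain ⟨K, hK⟩ := pow_unbounded_of_one_lt C (one_lt_two)
  have hK0 : (0 : ℝ) ≤ K := by positivity
  refine ⟨C + K + 1, by linarith, ?_⟩
  intro M hM n hn
  have hKM : K + 1 < M := by
    have : ((K + 1 : ℕ) : ℝ) < M := by push_cast; linarith
    exact_mod_cast this
  obtain ⟨e, rfl⟩ : ∃ e, M = K + e + 1 := ⟨M - 1 - K, by omega⟩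
  have hn' := hpos n hn
  have key : ∀ j ∈ Finset.Icc 1 n,
      (j : ℝ) ^ (K + e + 1 - 1) / lam j ≤ C * (n : ℝ) ^ (K + e) / lam n := by
    intro j hj
    rw [Finset.mem_Icc] at hj
    have h1 := aux7 lam hpos C hC h K hK.le n (n - j) j hj.1 hj.2 le_rfl
    have h3 := hpos j hj.1
    have h4 : (j : ℝ) ^ e ≤ (n : ℝ) ^ e := by
      have := hj.2
      gcongr
    rw [Nat.add_sub_cancel, div_le_div_iff₀ h3 hn']
    calc (j : ℝ) ^ (K + e) * lam n = (lam n * (j : ℝ) ^ K) * (j : ℝ) ^ e := by ring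
      _ ≤ (C * (n : ℝ) ^ K * lam j) * (n : ℝ) ^ e := by gcongr
      _ = _ := by ring
  have hs := Finset.sum_le_card_nsmul _ _ _ key
  refine hs.trans ?_
  rw [Nat.card_Icc, Nat.add_sub_cancel, nsmul_eq_mul]
  have h0 : 0 ≤ (n : ℝ) ^ (K + e + 1) / lam n := by positivity
  calc (n : ℝ) * (C * (n : ℝ) ^ (K + e) / lam n)
      = C * ((n : ℝ) ^ (K + e + 1) / lam n) := by ring
    _ ≤ _ := mul_le_mul_of_nonneg_right (by linarith) h0
end

section
/- Let (λ_n)_{n≥1} be positive real numbers satisfying the doubling condition: there exists C > 1 such that C⁻¹ λ_n ≤ λ_k ≤ C λ_n whenever n ≥ 1 and n ≤ k ≤ 2n. Then there exists a real number M₀ > 1 such that for every integer M > M₀ and every n ≥ 1 one has Σ_{j>n} 1/(λ_j · j^{M+1}) ≤ M₀ / (n^{M} λ_n). -/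
theorem aux_growth (lam : ℕ → ℝ) (hpos : ∀ n, 1 ≤ n → 0 < lam n) (C : ℝ) (hC : 1 < C)
    (h : ∀ n k : ℕ, 1 ≤ n → n ≤ k → k ≤ 2 * n →
      C⁻¹ * lam n ≤ lam k ∧ lam k ≤ C * lam n) (d : ℕ) (hd : C ≤ 2 ^ d) (j : ℕ) :
    ∀ t n : ℕ, j - n ≤ t → 1 ≤ n → n ≤ j → lam n * (n : ℝ) ^ d ≤ C * (j : ℝ) ^ d * lam j := by
  have hC0 : 0 < C := by linarith
  have key : ∀ n k : ℕ, 1 ≤ n → n ≤ k → k ≤ 2 * n → lam n ≤ C * lam k := by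
    intro n k h1 h2 h3
    have := (h n k h1 h2 h3).1
    rwa [inv_mul_le_iff₀ hC0] at this
  intro t
  induction t with
  | zero =>
    intro n ht hn hnj
    obtain rfl : n = j := by omega
    have := mul_pos (hpos n hn) (pow_pos (show (0:ℝ) < n by exact_mod_cast hn) d)
    nlinarith
  | succ t ih =>
    intro n ht hn hnj
    have hl := hpos j (by omega)
    have hn0 : (0:ℝ) < n := by exact_mod_cast hn
    by_cases hj : j ≤ 2 * n
    · have h1 := key n j hn hnj hj
      have h2 : (n : ℝ) ^ d ≤ (j : ℝ) ^ d := by gcongr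
      calc lam n * (n : ℝ) ^ d ≤ (C * lam j) * (j : ℝ) ^ d := by gcongr
        _ = _ := by ring
    · have h1 := key n (2 * n) hn (by omega) le_rfl
      have h2 := ih (2 * n) (by omega) (by omega) (by omega)
      push_cast at h2
      rw [mul_pow] at h2
      have h3 := hpos (2 * n) (by omega)
      calc lam n * (n : ℝ) ^ d ≤ (C * lam (2 * n)) * (n : ℝ) ^ d := by gcongr
        _ ≤ (2 ^ d * lam (2 * n)) * (n : ℝ) ^ d := by gcongr
        _ = lam (2 * n) * (2 ^ d * (n : ℝ) ^ d) := by ring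
        _ ≤ _ := h2

/-- if `(λ_n)_{n ≥ 1}` are positive and doubling, then there is `M₀ > 1` such
that for every integer `M > M₀` and every `n ≥ 1`,
`Σ_{j > n} 1/(λ_j · j^{M+1}) ≤ M₀ / (n^M λ_n)` (the series being convergent). -/
theorem statement8 (lam : ℕ → ℝ) (hpos : ∀ n, 1 ≤ n → 0 < lam n)
    (hdbl : ∃ C : ℝ, 1 < C ∧ ∀ n k : ℕ, 1 ≤ n → n ≤ k → k ≤ 2 * n →
      C⁻¹ * lam n ≤ lam k ∧ lam k ≤ C * lam n) :
    ∃ M₀ : ℝ, 1 < M₀ ∧ ∀ M : ℕ, M₀ < (M : ℝ) → ∀ n : ℕ, 1 ≤ n →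
      Summable (fun j : ℕ => if n < j then 1 / (lam j * (j : ℝ) ^ (M + 1)) else 0) ∧
      (∑' j : ℕ, if n < j then 1 / (lam j * (j : ℝ) ^ (M + 1)) else 0) ≤
        M₀ / ((n : ℝ) ^ M * lam n) := by
  obtain ⟨C, hC, h⟩ := hdbl
  obtain ⟨d, hd⟩ := pow_unbounded_of_one_lt C (show (1:ℝ) < 2 by norm_num)
  have hd0 : (0:ℝ) ≤ d := by positivity
  refine ⟨C + d + 1, by linarith, ?_⟩
  intro M hM n hn
  have hMd : d + 1 ≤ M := by
    have : ((d + 1 : ℕ) : ℝ) ≤ M := by push_cast; linarith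
    exact_mod_cast this
  obtain ⟨e, rfl⟩ := Nat.exists_eq_add_of_le hMd
  have hn0 : (0:ℝ) < n := by exact_mod_cast hn
  have hln := hpos n hn
  have hC0 : 0 < C := by linarith
  have hterm : ∀ j : ℕ, n < j → 1 / (lam j * (j : ℝ) ^ (d + 1 + e + 1)) ≤
      C / ((n : ℝ) ^ (d + e) * lam n) * ((j : ℝ) ^ 2)⁻¹ := by
    intro j hj
    have hj0 : (0:ℝ) < j := by exact_mod_cast (by omega : 0 < j)
    have hlj := hpos j (by omega)
    have hg := aux_growth lam hpos C hC h d hd.le j (j - n) n le_rfl hn hj.le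
    have hnj : (n : ℝ) ^ e ≤ (j : ℝ) ^ e := by gcongr
    rw [← div_eq_mul_inv, div_div, div_le_div_iff₀ (by positivity) (by positivity)]
    calc 1 * ((n : ℝ) ^ (d + e) * lam n * (j : ℝ) ^ 2)
        = (lam n * (n : ℝ) ^ d) * (n : ℝ) ^ e * (j : ℝ) ^ 2 := by ring
      _ ≤ (C * (j : ℝ) ^ d * lam j) * (j : ℝ) ^ e * (j : ℝ) ^ 2 := by gcongr
      _ = _ := by ring
  have hnn : ∀ j : ℕ, 0 ≤ (if n < j then 1 / (lam j * (j : ℝ) ^ (d + 1 + e + 1)) else 0) := by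
    intro j
    split_ifs with hj
    · have hlj := hpos j (by omega)
      positivity
    · exact le_rfl
  have hsum : ∀ N : ℕ, ∑ j ∈ Finset.range N,
      (if n < j then 1 / (lam j * (j : ℝ) ^ (d + 1 + e + 1)) else 0) ≤
        (C + d + 1) / ((n : ℝ) ^ (d + 1 + e) * lam n) := by
    intro N
    rw [← Finset.sum_filter]
    calc _ ≤ ∑ j ∈ (Finset.range N).filter (fun j => n < j),
          C / ((n : ℝ) ^ (d + e) * lam n) * ((j : ℝ) ^ 2)⁻¹ :=
          Finset.sum_le_sum fun j hj => hterm j (Finset.mem_filter.1 hj).2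
      _ ≤ ∑ j ∈ Finset.Ioc n (n + N), C / ((n : ℝ) ^ (d + e) * lam n) * ((j : ℝ) ^ 2)⁻¹ := by
          apply Finset.sum_le_sum_of_subset_of_nonneg
          · intro j hj
            simp only [Finset.mem_filter, Finset.mem_range, Finset.mem_Ioc] at hj ⊢
            omega
          · intros
            positivity
      _ = C / ((n : ℝ) ^ (d + e) * lam n) * ∑ j ∈ Finset.Ioc n (n + N), ((j : ℝ) ^ 2)⁻¹ := by
          rw [Finset.mul_sum]
      _ ≤ C / ((n : ℝ) ^ (d + e) * lam n) * (n : ℝ)⁻¹ := by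
          have h1 := sum_Ioc_inv_sq_le_sub (α := ℝ) (k := n) (n := n + N) (by omega) (by omega)
          have h2 : (0:ℝ) ≤ ((n + N : ℕ) : ℝ)⁻¹ := by positivity
          gcongr
          linarith
      _ = C / ((n : ℝ) ^ (d + 1 + e) * lam n) := by
          rw [← div_eq_mul_inv, div_div]
          congr 1
          ring
      _ ≤ _ := by
          gcongr
          linarith
  exact ⟨summable_of_sum_range_le hnn hsum, Real.tsum_le_of_sum_range_le hnn hsum⟩
end

section
/- Let (λ_n)_{n≥0} be positive real numbers with λ_n ≥ 1 for all n. Let ((f_k, E_k))_{k≥1} be a sequence of pairs where each f_k ∈ L²(𝕋, m) satisfies 0 ≤ f_k ≤ 2 m-a.e. and ‖f_k‖_{ℓ²(λ)} < ∞, each E_k ⊆ 𝕋 is a nonempty compact set containing the support of the measure f_k·m, and the sequence is Cauchy with respect to the metric d_λ((f,E),(g,K)) = ‖f − g‖_{ℓ²(λ)} + d_𝒞(E,K). Then there exists a pair (f, E) with f ∈ L²(𝕋, m), 0 ≤ f ≤ 2 m-a.e., ‖f‖_{ℓ²(λ)} < ∞, E ⊆ 𝕋 nonempty compact containing the support of f·m,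 such that d_λ((f_k, E_k), (f, E)) → 0 as k → ∞. -/
open MeasureTheory Filter Topology

noncomputable section

/-- Fourier coefficients of a real-valued function on the circle. -/
def fc (f : UnitAddCircle → ℝ) (n : ℤ) : ℂ := fourierCoeff (fun x => (f x : ℂ)) n

/-- The Hausdorff-type metric `d_𝒞(E,K) = sup_{ζ∈E} dist(ζ,K) + sup_{ξ∈K} dist(ξ,E)` on
nonempty compact subsets of the circle. -/
def dC (E K : Set UnitAddCircle) : ℝ :=
  (⨆ x : E, Metric.infDist (x : UnitAddCircle) K) +
    ⨆ y : K, Metric.infDist (y : UnitAddCircle) E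

/-- The weighted `ℓ²(λ)` distance `‖f − g‖_{ℓ²(λ)}`. -/
def dlam (lam : ℕ → ℝ) (f g : UnitAddCircle → ℝ) : ℝ :=
  Real.sqrt (∑' n : ℤ, ‖fc f n - fc g n‖ ^ 2 * lam n.natAbs)

lemma aux_hasSum (x : lp (fun _ : ℤ => ℂ) 2) : HasSum (fun i => ‖x i‖ ^ 2) (‖x‖ ^ 2) := by
  apply_mod_cast lp.hasSum_norm ?_ x
  simp

lemma aux_mono (x y : lp (fun _ : ℤ => ℂ) 2) (h : ∀ i, ‖x i‖ ≤ ‖y i‖) : ‖x‖ ≤ ‖y‖ := by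
  have := hasSum_le (fun i => pow_le_pow_left₀ (norm_nonneg _) (h i) 2) (aux_hasSum x) (aux_hasSum y)
  exact (sq_le_sq₀ (norm_nonneg _) (norm_nonneg _)).1 this

lemma aux_mem (x : ℤ → ℂ) (h : Summable fun i => ‖x i‖ ^ 2) : Memℓp x 2 := by
  apply memℓp_gen
  simpa using h

lemma aux_dC_nonneg (E K : Set UnitAddCircle) : 0 ≤ dC E K :=
  add_nonneg (Real.iSup_nonneg fun _ => Metric.infDist_nonneg)
    (Real.iSup_nonneg fun _ => Metric.infDist_nonneg)

lemma aux_fin {E K : Set UnitAddCircle} (hE : E.Nonempty) (hK : K.Nonempty) :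
    Metric.hausdorffEDist E K ≠ ⊤ :=
  Metric.hausdorffEDist_ne_top_of_nonempty_of_bounded hE hK
    (Bornology.IsBounded.all _) (Bornology.IsBounded.all _)

lemma aux_dC_le {E K : Set UnitAddCircle} (hE : E.Nonempty) (hK : K.Nonempty) :
    dC E K ≤ 2 * Metric.hausdorffDist E K := by
  have h1 : (⨆ x : E, Metric.infDist (x : UnitAddCircle) K) ≤ Metric.hausdorffDist E K :=
    Real.iSup_le (fun x => Metric.infDist_le_hausdorffDist_of_mem x.2 (aux_fin hE hK))
      Metric.hausdorffDist_nonneg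
  have h2 : (⨆ x : K, Metric.infDist (x : UnitAddCircle) E) ≤ Metric.hausdorffDist E K := by
    refine Real.iSup_le (fun x => ?_) Metric.hausdorffDist_nonneg
    rw [Metric.hausdorffDist_comm]
    exact Metric.infDist_le_hausdorffDist_of_mem x.2 (aux_fin hK hE)
  unfold dC
  linarith

lemma aux_bdd_s13 {E K : Set UnitAddCircle} (hE : E.Nonempty) (hK : K.Nonempty) :
    BddAbove (Set.range fun x : E => Metric.infDist (x : UnitAddCircle) K) := by
  refine ⟨Metric.hausdorffDist E K, ?_⟩
  rintro _ ⟨x, rfl⟩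
  exact Metric.infDist_le_hausdorffDist_of_mem x.2 (aux_fin hE hK)

lemma aux_le_dC {E K : Set UnitAddCircle} (hE : E.Nonempty) (hK : K.Nonempty) :
    Metric.hausdorffDist E K ≤ dC E K := by
  have n1 : 0 ≤ (⨆ x : E, Metric.infDist (x : UnitAddCircle) K) :=
    Real.iSup_nonneg fun _ => Metric.infDist_nonneg
  have n2 : 0 ≤ (⨆ x : K, Metric.infDist (x : UnitAddCircle) E) :=
    Real.iSup_nonneg fun _ => Metric.infDist_nonneg
  refine Metric.hausdorffDist_le_of_infDist (aux_dC_nonneg _ _) (fun x hx => ?_) (fun x hx => ?_)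
  · have := le_ciSup (aux_bdd_s13 hE hK) ⟨x, hx⟩
    unfold dC
    simp only at this
    linarith
  · have := le_ciSup (aux_bdd_s13 hK hE) ⟨x, hx⟩
    unfold dC
    simp only at this
    linarith

lemma aux_supp (f : UnitAddCircle → ℝ) : ∀ᵐ x ∂hm, x ∉ measSupport f → f x = 0 := by
  obtain ⟨T, hTc, hTs, hTU⟩ := TopologicalSpace.isOpen_sUnion_countable
    {U : Set UnitAddCircle | IsOpen U ∧ ∀ᵐ x ∂hm, x ∈ U → f x = 0} (fun s hs => hs.1)
  have : ∀ᵐ x ∂hm, ∀ U ∈ T, x ∈ U → f x = 0 :=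
    (ae_ball_iff hTc).2 fun U hU => (hTs hU).2
  filter_upwards [this] with x hx hxs
  rw [measSupport, Set.mem_compl_iff, not_not, ← hTU] at hxs
  obtain ⟨U, hU, hxU⟩ := hxs
  exact hx U hU hxU

lemma aux_weight (lam : ℕ → ℝ) (hlam : ∀ n, 1 ≤ lam n) (z : ℂ) (n : ℤ) :
    ‖(Real.sqrt (lam n.natAbs) : ℂ) * z‖ ^ 2 = ‖z‖ ^ 2 * lam n.natAbs := by
  have h0 : 0 ≤ lam n.natAbs := zero_le_one.trans (hlam _)
  rw [norm_mul, mul_pow, Complex.norm_real, Real.norm_eq_abs, sq_abs, Real.sq_sqrt h0, mul_comm]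

lemma aux_part1 (lam : ℕ → ℝ) (hlam : ∀ n, 1 ≤ lam n)
    (f : ℕ → UnitAddCircle → ℝ)
    (hmem : ∀ k, MemLp (f k) 2 hm)
    (hbd : ∀ k, ∀ᵐ x ∂hm, 0 ≤ f k x ∧ f k x ≤ 2)
    (hsum : ∀ k, Summable (fun n : ℤ => ‖fc (f k) n‖ ^ 2 * lam n.natAbs))
    (hcauchy : ∀ δ : ℝ, 0 < δ → ∃ K : ℕ, ∀ j k : ℕ, K ≤ j → K ≤ k →
      dlam lam (f j) (f k) < δ) :
    ∃ g : UnitAddCircle → ℝ, 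
      MemLp g 2 hm ∧ (∀ᵐ x ∂hm, 0 ≤ g x ∧ g x ≤ 2) ∧
      Summable (fun n : ℤ => ‖fc g n‖ ^ 2 * lam n.natAbs) ∧
      Tendsto (fun k => dlam lam (f k) g) atTop (𝓝 0) ∧
      ∃ φ : ℕ → ℕ, StrictMono φ ∧
        ∀ᵐ x ∂hm, Tendsto (fun i => f (φ i) x) atTop (𝓝 (g x)) := by
  let w : ℤ → ℝ := fun n => Real.sqrt (lam n.natAbs)
  have hw : ∀ n, 1 ≤ w n := fun n => Real.one_le_sqrt.2 (hlam _)
  have hw0 : ∀ n, (w n : ℂ) ≠ 0 := fun n => by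
    have := hw n
    exact_mod_cast (by linarith : w n ≠ 0)
  have hwt : ∀ z n, ‖(w n : ℂ) * z‖ ^ 2 = ‖z‖ ^ 2 * lam n.natAbs := aux_weight lam hlam
  have hwz : ∀ (z : ℂ) n, ‖z‖ ≤ ‖(w n : ℂ) * z‖ := fun z n => by
    rw [norm_mul, Complex.norm_real, Real.norm_eq_abs, abs_of_nonneg (by linarith [hw n])]
    exact le_mul_of_one_le_left (norm_nonneg _) (hw n)
  let V : ℕ → lp (fun _ : ℤ => ℂ) 2 := fun k => ⟨fun n => (w n : ℂ) * fc (f k) n,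
    aux_mem _ (by simpa only [hwt] using hsum k)⟩
  have hdl : ∀ (u v : UnitAddCircle → ℝ) (x y : lp (fun _ : ℤ => ℂ) 2),
      (∀ n, x n = (w n : ℂ) * fc u n) → (∀ n, y n = (w n : ℂ) * fc v n) →
      dlam lam u v = ‖x - y‖ := by
    intro u v x y hx hy
    rw [dlam, ← Real.sqrt_sq (norm_nonneg (x - y)), ← (aux_hasSum (x - y)).tsum_eq]
    congr 2
    ext n
    rw [← hwt, lp.coeFn_sub, Pi.sub_apply, hx, hy, mul_sub]
  have hVc : CauchySeq V := by
    rw [Metric.cauchySeq_iff]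
    intro ε hε
    obtain ⟨K, hK⟩ := hcauchy ε hε
    refine ⟨K, fun j hj k hk => ?_⟩
    rw [dist_eq_norm, ← hdl (f j) (f k) (V j) (V k) (fun _ => rfl) (fun _ => rfl)]
    exact hK j k hj hk
  obtain ⟨A, hA⟩ := cauchySeq_tendsto_of_complete hVc
  let B : lp (fun _ : ℤ => ℂ) 2 := ⟨fun n => A n / w n, aux_mem _ (by
    refine Summable.of_nonneg_of_le (fun _ => by positivity) (fun n => ?_) (aux_hasSum A).summable
    refine pow_le_pow_left₀ (norm_nonneg _) ?_ 2
    have := hwz (A n / w n) n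
    rwa [mul_div_cancel₀ _ (hw0 n)] at this)⟩
  have hFm : ∀ k, MemLp (fun x => (f k x : ℂ)) 2 (@AddCircle.haarAddCircle 1 _) :=
    fun k => (hmem k).ofReal
  let F : ℕ → Lp ℂ 2 (@AddCircle.haarAddCircle 1 _) := fun k => (hFm k).toLp
  have hF : ∀ k n, fourierBasis.repr (F k) n = fc (f k) n := fun k n => by
    rw [fourierBasis_repr, fc]
    exact congrFun (fourierCoeff_congr_ae (hFm k).coeFn_toLp) n
  let H : Lp ℂ 2 (@AddCircle.haarAddCircle 1 _) := fourierBasis.repr.symm B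
  have hH : ∀ n, fourierCoeff H n = A n / w n := fun n => by
    rw [← fourierBasis_repr]
    simp [H, B]
  have hFH : Tendsto F atTop (𝓝 H) := by
    rw [tendsto_iff_norm_sub_tendsto_zero] at hA ⊢
    refine squeeze_zero (fun _ => norm_nonneg _) (fun k => ?_) hA
    rw [← (fourierBasis (T := 1)).repr.norm_map, map_sub]
    refine aux_mono _ _ fun n => ?_
    have h1 : (fourierBasis.repr (F k) - fourierBasis.repr H) n = fc (f k) n - A n / w n := by
      rw [lp.coeFn_sub, Pi.sub_apply, hF]
      simp [H, B]
    have h2 : (V k - A) n = (w n : ℂ) * (fc (f k) n - A n / w n) := by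
      rw [lp.coeFn_sub, Pi.sub_apply, mul_sub, mul_div_cancel₀ _ (hw0 n)]
    rw [h1, h2]
    exact hwz _ n
  obtain ⟨φ, hφ, hae⟩ := (tendstoInMeasure_of_tendsto_Lp hFH).exists_seq_tendsto_ae
  have hFae : ∀ᵐ x ∂(@AddCircle.haarAddCircle 1 _), ∀ k, F k x = (f k x : ℂ) :=
    ae_all_iff.2 fun k => (hFm k).coeFn_toLp
  have hbd' : ∀ᵐ x ∂(@AddCircle.haarAddCircle 1 _), ∀ k, 0 ≤ f k x ∧ f k x ≤ 2 :=
    ae_all_iff.2 hbd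
  have hre : ∀ᵐ x ∂(@AddCircle.haarAddCircle 1 _),
      Tendsto (fun i => f (φ i) x) atTop (𝓝 (H x).re) ∧ (H x).im = 0 := by
    filter_upwards [hae, hFae] with x hx hx'
    simp only [hx'] at hx
    constructor
    · simpa [Function.comp_def] using (Complex.continuous_re.tendsto _).comp hx
    · have := (Complex.continuous_im.tendsto _).comp hx
      have h2 : (Complex.im ∘ fun i => (f (φ i) x : ℂ)) = fun _ => 0 := by
        ext i; simp
      rw [h2] at this
      exact (tendsto_nhds_unique this tendsto_const_nhds)
  let g : UnitAddCircle → ℝ := fun x => (H x).re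
  have hgfc : ∀ n, fc g n = A n / w n := fun n => by
    rw [← hH, fc]
    refine congrFun (fourierCoeff_congr_ae ?_) n
    filter_upwards [hre] with x hx
    apply Complex.ext <;> simp [g, hx.2]
  have hgA : ∀ n, A n = (w n : ℂ) * fc g n := fun n => by
    rw [hgfc, mul_div_cancel₀ _ (hw0 n)]
  refine ⟨g, (Lp.memLp H).re, ?_, ?_, ?_, φ, hφ, ?_⟩
  · change ∀ᵐ x ∂(@AddCircle.haarAddCircle 1 _), _
    filter_upwards [hre, hbd'] with x hx hb
    exact ⟨ge_of_tendsto' hx.1 fun i => (hb _).1, le_of_tendsto' hx.1 fun i => (hb _).2⟩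
  · simp only [← hwt, ← hgA]
    exact (aux_hasSum A).summable
  · rw [tendsto_iff_norm_sub_tendsto_zero] at hA
    refine hA.congr fun k => ?_
    exact (hdl (f k) g (V k) A (fun _ => rfl) hgA).symm
  · exact hre.mono fun x hx => hx.1

/-- completeness of the space of pairs `(f, E)` with `0 ≤ f ≤ 2` a.e.,
`‖f‖_{ℓ²(λ)} < ∞`, and `E` a nonempty compact set containing the support of `f·m`, for the
metric `d_λ((f,E),(g,K)) = ‖f−g‖_{ℓ²(λ)} + d_𝒞(E,K)`: every Cauchy sequence converges. -/
theorem statement13 (lam : ℕ → ℝ) (hlam : ∀ n, 1 ≤ lam n)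
    (f : ℕ → UnitAddCircle → ℝ) (E : ℕ → Set UnitAddCircle)
    (hmem : ∀ k, MemLp (f k) 2 hm)
    (hbd : ∀ k, ∀ᵐ x ∂hm, 0 ≤ f k x ∧ f k x ≤ 2)
    (hsum : ∀ k, Summable (fun n : ℤ => ‖fc (f k) n‖ ^ 2 * lam n.natAbs))
    (hcpt : ∀ k, IsCompact (E k)) (hne : ∀ k, (E k).Nonempty)
    (hsupp : ∀ k, measSupport (f k) ⊆ E k)
    (hcauchy : ∀ δ : ℝ, 0 < δ → ∃ K : ℕ, ∀ j k : ℕ, K ≤ j → K ≤ k →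
      dlam lam (f j) (f k) + dC (E j) (E k) < δ) :
    ∃ g : UnitAddCircle → ℝ, ∃ G : Set UnitAddCircle,
      MemLp g 2 hm ∧ (∀ᵐ x ∂hm, 0 ≤ g x ∧ g x ≤ 2) ∧
      Summable (fun n : ℤ => ‖fc g n‖ ^ 2 * lam n.natAbs) ∧
      IsCompact G ∧ G.Nonempty ∧ measSupport g ⊆ G ∧
      Tendsto (fun k => dlam lam (f k) g + dC (E k) G) atTop (𝓝 0) := by
  obtain ⟨g, hg1, hg2, hg3, hg4, φ, hφ, hae⟩ := aux_part1 lam hlam f hmem hbd hsum (by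
    intro δ hδ
    obtain ⟨K, hK⟩ := hcauchy δ hδ
    exact ⟨K, fun j k hj hk => by linarith [hK j k hj hk, aux_dC_nonneg (E j) (E k)]⟩)
  let N : ℕ → TopologicalSpace.NonemptyCompacts UnitAddCircle := fun k => ⟨⟨E k, hcpt k⟩, hne k⟩
  have hN : CauchySeq N := by
    rw [Metric.cauchySeq_iff]
    intro ε hε
    obtain ⟨K, hK⟩ := hcauchy ε hε
    refine ⟨K, fun j hj k hk => ?_⟩
    rw [Metric.NonemptyCompacts.dist_eq]
    have h1 : Metric.hausdorffDist (E j) (E k) ≤ dC (E j) (E k) := aux_le_dC (hne j) (hne k)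
    have h2 : 0 ≤ dlam lam (f j) (f k) := Real.sqrt_nonneg _
    exact lt_of_le_of_lt h1 (by linarith [hK j k hj hk])
  obtain ⟨G, hG⟩ := cauchySeq_tendsto_of_complete hN
  have hd : Tendsto (fun k => Metric.hausdorffDist (E k) (G : Set UnitAddCircle)) atTop (𝓝 0) :=
    tendsto_iff_dist_tendsto_zero.1 hG
  refine ⟨g, G, hg1, hg2, hg3, G.isCompact, G.nonempty, ?_, ?_⟩
  · intro x hx
    by_contra hxG
    apply hx
    have hpos : 0 < Metric.infDist x (G : Set UnitAddCircle) :=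
      (G.isCompact.isClosed.notMem_iff_infDist_pos G.nonempty).1 hxG
    set ε := Metric.infDist x (G : Set UnitAddCircle) / 2 with hε
    refine ⟨Metric.ball x ε, ⟨Metric.isOpen_ball, ?_⟩, Metric.mem_ball_self (by linarith)⟩
    have hev : ∀ᶠ k in atTop, Metric.hausdorffDist (E k) (G : Set UnitAddCircle) < ε :=
      hd.eventually (gt_mem_nhds (by linarith))
    have hs : ∀ᵐ y ∂hm, ∀ k, y ∉ measSupport (f k) → f k y = 0 :=
      ae_all_iff.2 fun k => aux_supp (f k)
    filter_upwards [hae, hs] with y hy hys hyb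
    refine tendsto_nhds_unique hy (tendsto_const_nhds.congr' ?_)
    filter_upwards [hφ.tendsto_atTop.eventually hev] with i hi
    refine (hys _ fun hm' => ?_).symm
    have h1 := Metric.infDist_le_hausdorffDist_of_mem (hsupp _ hm')
      (aux_fin (hne (φ i)) G.nonempty)
    have h2 := Metric.infDist_le_infDist_add_dist (s := (G : Set UnitAddCircle)) (x := x) (y := y)
    rw [Metric.mem_ball, dist_comm] at hyb
    linarith
  · have h2 : Tendsto (fun k => dC (E k) G) atTop (𝓝 0) :=
      squeeze_zero (fun _ => aux_dC_nonneg _ _) (fun k => aux_dC_le (hne k) G.nonempty)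
        (by simpa using hd.const_mul 2)
    simpa using hg4.add h2
end
end
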